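/- arXiv:0911.4080 — 7 statements merged into one kernel-verified Lean document; each statement's English description precedes it below -/
import Mathlib

section
/- Consider the noise-free linear model Y = Xβ, where X is an n×p real matrix whose columns all have unit Euclidean norm, β ∈ ℝ^p has support S = {j : β_j ≠ 0} of size s with 1 ≤ s < p, and N = {1,…,p} \ S. Assume: (E') the minimum eigenvalue of C_SS is at least λ₀ for some constant λ₀ > 0; (I') ‖C_NS C_SS^{-1}‖_∞ ≤ 1 − η for some constant 0 < η < 1; and (J') the tuning parameter satisfies 0 ≤ λ < ρ / ‖C_SS^{-1}‖_∞. Then for every such β with β_S ∈ M_ρ^s, there exists a vector β̂ ∈ ℝ^p minimizing the lasso objective b ↦ ‖Y − Xb‖₂² + λ‖b‖₁ over ℝ^p such that sgn(β̂_j) = sgn(β_j) for every j ∈ {1,…,p}. -/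
open Matrix

/-- The lasso objective `b ↦ ‖Y − Xb‖₂² + λ‖b‖₁`. -/
noncomputable def lassoObj {n p : ℕ} (X : Matrix (Fin n) (Fin p) ℝ) (Y : Fin n → ℝ)
    (lam : ℝ) (b : Fin p → ℝ) : ℝ :=
  ∑ i, (Y i - ∑ j, X i j * b j) ^ 2 + lam * ∑ j, |b j|

/-- The signal block `C_SS` of the Gram matrix `C = XᵀX`, indexed by the support of `β`. -/
noncomputable def CssMat {n p : ℕ} (X : Matrix (Fin n) (Fin p) ℝ) (β : Fin p → ℝ) :
    Matrix {j : Fin p // β j ≠ 0} {j : Fin p // β j ≠ 0} ℝ :=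
  Matrix.of fun a b => (Xᵀ * X) a.1 b.1

/-- The noise-signal block `C_NS` of the Gram matrix `C = XᵀX`. -/
noncomputable def CnsMat {n p : ℕ} (X : Matrix (Fin n) (Fin p) ℝ) (β : Fin p → ℝ) :
    Matrix {j : Fin p // β j = 0} {j : Fin p // β j ≠ 0} ℝ :=
  Matrix.of fun a b => (Xᵀ * X) a.1 b.1

theorem lasso_opt {n p : ℕ} (X : Matrix (Fin n) (Fin p) ℝ) (Y : Fin n → ℝ)
    (lam : ℝ) (c : Fin p → ℝ)
    (h : ∀ j, ∀ t : ℝ, 2 * (∑ i, X i j * (Y i - ∑ k, X i k * c k)) * (t - c j)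
      ≤ lam * (|t| - |c j|)) (b : Fin p → ℝ) :
    lassoObj X Y lam c ≤ lassoObj X Y lam b := by
  unfold lassoObj
  have h1 : ∑ j, 2 * (∑ i, X i j * (Y i - ∑ k, X i k * c k)) * (b j - c j)
      ≤ ∑ j, lam * (|b j| - |c j|) := Finset.sum_le_sum fun j _ => h j (b j)
  have h2 : ∑ j, 2 * (∑ i, X i j * (Y i - ∑ k, X i k * c k)) * (b j - c j)
      = ∑ i, 2 * (Y i - ∑ k, X i k * c k) * (∑ j, X i j * b j - ∑ j, X i j * c j) := by
    simp_rw [← Finset.sum_sub_distrib, Finset.mul_sum, Finset.sum_mul]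
    rw [Finset.sum_comm]
    refine Finset.sum_congr rfl fun i _ => Finset.sum_congr rfl fun j _ => ?_
    ring
  have h3 : ∑ i, ((Y i - ∑ k, X i k * c k) ^ 2
      - 2 * (Y i - ∑ k, X i k * c k) * (∑ j, X i j * b j - ∑ j, X i j * c j))
      ≤ ∑ i, (Y i - ∑ j, X i j * b j) ^ 2 := by
    refine Finset.sum_le_sum fun i _ => ?_
    nlinarith [sq_nonneg (∑ j, X i j * b j - ∑ j, X i j * c j)]
  rw [Finset.sum_sub_distrib] at h3
  rw [← Finset.mul_sum, Finset.sum_sub_distrib] at h1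
  linarith

theorem sign_facts (x : ℝ) (hx : x ≠ 0) : |Real.sign x| = 1 := by
  rcases lt_or_gt_of_ne hx with h | h
  · simp [Real.sign_of_neg h]
  · simp [Real.sign_of_pos h]

theorem row_bound {ι : Type*} [Fintype ι] (f s : ι → ℝ) (hs : ∀ a, |s a| = 1) :
    |∑ b, f b * s b| ≤ ∑ b, |f b| := by
  refine (Finset.abs_sum_le_sum_abs _ _).trans (le_of_eq ?_)
  exact Finset.sum_congr rfl fun b _ => by rw [abs_mul, hs, mul_one]

/-- Theorem 1 of the paper. In the noise-free model `Y = Xβ` with unit-norm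
design columns, support `S` of size `1 ≤ s < p`, Conditions E' (minimum eigenvalue of `C_SS`
at least `λ₀ > 0`), I' (`‖C_NS C_SS⁻¹‖_∞ ≤ 1 − η`) and J' (`0 ≤ λ < ρ/‖C_SS⁻¹‖_∞`), for every
such `β` with `β_S ∈ M_ρ^s` there is a lasso minimizer `β̂` with `sgn β̂ = sgn β`. -/
theorem stmt_0 {n p : ℕ} (X : Matrix (Fin n) (Fin p) ℝ) (β : Fin p → ℝ)
    (ρ lam0 η lam : ℝ) (hρ : 0 < ρ) (hlam0 : 0 < lam0) (hη : 0 < η) (hη1 : η < 1)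
    (hlam : 0 ≤ lam)
    (hcols : ∀ j, ∑ i, (X i j) ^ 2 = 1)
    (hs1 : 1 ≤ Fintype.card {j : Fin p // β j ≠ 0})
    (hsp : Fintype.card {j : Fin p // β j ≠ 0} < p)
    (hM : ∀ j, β j ≠ 0 → ρ ≤ |β j|)
    -- Condition E': the minimum eigenvalue of `C_SS` is at least `λ₀`
    (hE' : ∀ v : {j : Fin p // β j ≠ 0} → ℝ,
      lam0 * ∑ a, (v a) ^ 2 ≤ ∑ a, ∑ b, v a * CssMat X β a b * v b)
    -- Condition I': `‖C_NS C_SS⁻¹‖_∞ ≤ 1 − η`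
    (hI' : ∀ i, ∑ b, |(CnsMat X β * (CssMat X β)⁻¹) i b| ≤ 1 - η)
    -- Condition J': `λ < ρ / ‖C_SS⁻¹‖_∞`
    (hJ' : lam * (⨆ a, ∑ b, |(CssMat X β)⁻¹ a b|) < ρ) :
    ∃ βhat : Fin p → ℝ,
      (∀ b, lassoObj X (X.mulVec β) lam βhat ≤ lassoObj X (X.mulVec β) lam b) ∧
      ∀ j, Real.sign (βhat j) = Real.sign (β j) := by
  classical
  have hdet : IsUnit (CssMat X β).det := by
    rw [isUnit_iff_ne_zero]
    intro h0
    obtain ⟨v, hv, hv0⟩ := Matrix.exists_mulVec_eq_zero_iff.mpr h0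
    have h1 := hE' v
    have h2 : ∑ a, ∑ b, v a * CssMat X β a b * v b = 0 := by
      refine Finset.sum_eq_zero fun a _ => ?_
      have h3 := congrFun hv0 a
      simp only [Matrix.mulVec, dotProduct, Pi.zero_apply] at h3
      simp_rw [mul_assoc]
      rw [← Finset.mul_sum, h3, mul_zero]
    rw [h2] at h1
    apply hv
    have h4 : ∑ a, v a ^ 2 = 0 := by
      have h5 : 0 ≤ ∑ a, v a ^ 2 := Finset.sum_nonneg fun a _ => sq_nonneg _
      nlinarith
    funext a
    have h6 := (Finset.sum_eq_zero_iff_of_nonneg (fun a _ => sq_nonneg (v a))).mp h4 a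
      (Finset.mem_univ a)
    simpa using h6
  set s : {j : Fin p // β j ≠ 0} → ℝ := fun a => Real.sign (β a.1) with hs
  have hsabs : ∀ a, |s a| = 1 := fun a => sign_facts _ a.2
  set w := (CssMat X β)⁻¹ *ᵥ s with hw
  have hCw : CssMat X β *ᵥ w = s := by
    rw [hw, Matrix.mulVec_mulVec, Matrix.mul_nonsing_inv _ hdet, Matrix.one_mulVec]
  have hNw : ∀ i, |(CnsMat X β *ᵥ w) i| ≤ 1 := by
    intro i
    rw [hw, Matrix.mulVec_mulVec]
    have := row_bound (fun b => (CnsMat X β * (CssMat X β)⁻¹) i b) s hsabs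
    have h2 := hI' i
    simp only [Matrix.mulVec, dotProduct]
    linarith
  have hwb : ∀ a, lam * |w a| < ρ := by
    intro a
    refine lt_of_le_of_lt (mul_le_mul_of_nonneg_left ?_ hlam) hJ'
    refine (row_bound (fun b => (CssMat X β)⁻¹ a b) s hsabs).trans ?_
    exact le_ciSup (f := fun a => ∑ b, |(CssMat X β)⁻¹ a b|) (Set.finite_range _).bddAbove a
  set d : Fin p → ℝ := fun j => if h : β j ≠ 0 then lam / 2 * w ⟨j, h⟩ else 0 with hd
  have hg : ∀ j, ∑ i, X i j * ((X *ᵥ β) i - ∑ k, X i k * (β k - d k))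
      = lam / 2 * ∑ a : {j : Fin p // β j ≠ 0}, (Xᵀ * X) j a.1 * w a := by
    intro j
    have h1 : ∀ i, (X *ᵥ β) i - ∑ k, X i k * (β k - d k) = ∑ k, X i k * d k := by
      intro i
      simp only [Matrix.mulVec, dotProduct]
      rw [← Finset.sum_sub_distrib]
      exact Finset.sum_congr rfl fun k _ => by ring
    simp_rw [h1, Finset.mul_sum]
    rw [Finset.sum_comm]
    rw [← Fintype.sum_subtype_add_sum_subtype (fun k => β k ≠ 0)]
    have h2 : ∑ k : {k : Fin p // ¬ β k ≠ 0}, ∑ i, X i j * (X i k.1 * d k.1) = 0 := by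
      refine Finset.sum_eq_zero fun k _ => Finset.sum_eq_zero fun i _ => ?_
      have : d k.1 = 0 := by simp only [hd]; rw [dif_neg k.2]
      rw [this]; ring
    rw [h2, add_zero]
    refine Finset.sum_congr rfl fun a _ => ?_
    have h3 : d a.1 = lam / 2 * w a := by simp only [hd]; rw [dif_pos a.2]
    rw [h3, Matrix.mul_apply, Finset.sum_mul, Finset.mul_sum]
    refine Finset.sum_congr rfl fun i _ => ?_
    rw [Matrix.transpose_apply]; ring
  have hdb : ∀ j, β j ≠ 0 → |d j| < |β j| := by
    intro j hj
    have h3 : d j = lam / 2 * w ⟨j, hj⟩ := by simp only [hd]; rw [dif_pos hj]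
    rw [h3, abs_mul, abs_of_nonneg (by linarith : 0 ≤ lam / 2)]
    have h4 := hwb ⟨j, hj⟩
    have h5 := hM j hj
    linarith
  refine ⟨fun j => β j - d j, lasso_opt X _ lam _ ?_, ?_⟩
  · intro j t
    rw [hg j]
    by_cases hj : β j = 0
    · have h1 : d j = 0 := by simp only [hd]; rw [dif_neg (not_not.mpr hj)]
      have h2 : |∑ a : {j : Fin p // β j ≠ 0}, (Xᵀ * X) j a.1 * w a| ≤ 1 := hNw ⟨j, hj⟩
      rw [h1, hj]
      simp only [sub_zero, abs_zero]
      have h3 : (∑ a : {j : Fin p // β j ≠ 0}, (Xᵀ * X) j a.1 * w a) * t ≤ |t| := by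
        refine (le_abs_self _).trans ?_
        rw [abs_mul]
        exact mul_le_of_le_one_left (abs_nonneg t) h2
      have := mul_le_mul_of_nonneg_left h3 hlam
      linarith
    · have h2 : ∑ a : {j : Fin p // β j ≠ 0}, (Xᵀ * X) j a.1 * w a = Real.sign (β j) :=
        congrFun hCw ⟨j, hj⟩
      rw [h2]
      have h3 := hdb j hj
      have h4 : Real.sign (β j) * (t - (β j - d j)) ≤ |t| - |β j - d j| := by
        rcases lt_or_gt_of_ne hj with h | h
        · rw [Real.sign_of_neg h]
          rw [abs_of_neg h, abs_lt] at h3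
          rw [abs_of_neg (by linarith : β j - d j < 0)]
          linarith [neg_abs_le t]
        · rw [Real.sign_of_pos h]
          rw [abs_of_pos h, abs_lt] at h3
          rw [abs_of_pos (by linarith : 0 < β j - d j)]
          linarith [le_abs_self t]
      have := mul_le_mul_of_nonneg_left h4 hlam
      linarith
  · intro j
    by_cases hj : β j = 0
    · have h1 : d j = 0 := by simp only [hd]; rw [dif_neg (not_not.mpr hj)]
      simp only [h1, sub_zero]
    · have h3 := hdb j hj
      simp only []
      rcases lt_or_gt_of_ne hj with h | h
      · rw [abs_of_neg h, abs_lt] at h3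
        rw [Real.sign_of_neg h, Real.sign_of_neg (by linarith)]
      · rw [abs_of_pos h, abs_lt] at h3
        rw [Real.sign_of_pos h, Real.sign_of_pos (by linarith)]
end

section
/- Let C be an s×s real symmetric positive definite matrix that is not diagonal (i.e., C has at least one nonzero off-diagonal entry), and let ρ > 0. Then there exists β ∈ ℝ^s with |β_j| ≥ ρ for every 1 ≤ j ≤ s such that the vector Cβ has at least one zero component, i.e., min |Cβ| = 0. -/
/-- Theorem 2 of the paper. If `C` is an `s × s` real symmetric positive
definite matrix which is not diagonal, then for every `ρ > 0` there exists `β ∈ M_ρ^s`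
(i.e. `|β j| ≥ ρ` for every `j`) such that the vector `C β` has a zero component. -/
theorem stmt_1 {s : ℕ} (hs : 1 ≤ s) (C : Matrix (Fin s) (Fin s) ℝ)
    (hpd : C.PosDef) (hoff : ∃ i j, i ≠ j ∧ C i j ≠ 0)
    (ρ : ℝ) (hρ : 0 < ρ) :
    ∃ β : Fin s → ℝ, (∀ j, ρ ≤ |β j|) ∧ ∃ i, C.mulVec β i = 0 := by
  obtain ⟨i, j, hij, hb⟩ := hoff
  have ha : 0 < C i i := hpd.diag_pos
  set v : Fin s → ℝ := fun k => if k = i ∨ k = j then 0 else ρ with hv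
  set S : ℝ := C.mulVec v i with hS
  set M : ℝ := C i i * ρ + |S| + |C i j| * ρ with hM
  have hb' : 0 < |C i j| := abs_pos.mpr hb
  have haρ : 0 < C i i * ρ := mul_pos ha hρ
  have hM0 : 0 ≤ M := by positivity
  refine ⟨v + Pi.single j (M / C i j) + Pi.single i (-(S + M) / C i i), ?_, i, ?_⟩
  · intro k
    by_cases hki : k = i
    · subst hki
      have : ρ ≤ (S + M) / C k k := by
        rw [le_div_iff₀ ha]
        have := neg_abs_le S
        have := mul_pos hb' hρ
        nlinarith
      simp only [Pi.add_apply, Pi.single_eq_same, Pi.single_eq_of_ne hij, hv]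
      simp only [true_or, if_true, zero_add, neg_div, abs_neg]
      exact this.trans (le_abs_self _)
    · by_cases hkj : k = j
      · subst hkj
        simp only [Pi.add_apply, Pi.single_eq_same, Pi.single_eq_of_ne hki, hv]
        simp only [or_true, if_true, zero_add, add_zero, abs_div, abs_of_nonneg hM0]
        rw [le_div_iff₀ hb']
        have := abs_nonneg S
        nlinarith
      · simp only [Pi.add_apply, Pi.single_eq_of_ne hkj, Pi.single_eq_of_ne hki, hv]
        simp [hki, hkj, le_abs_self]
  · rw [Matrix.mulVec_add, Matrix.mulVec_add]
    simp only [Pi.add_apply, Matrix.mulVec_single, ← hS]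
    simp
    field_simp
    ring
end

section
/- Consider the noise-free linear model Y = Xβ, where X is an n×p real matrix with columns x₁,…,x_p, β ∈ ℝ^p has support S = {j : β_j ≠ 0} of size s with 1 ≤ s < p, and N = {1,…,p} \ S. Let α̂ = XᵀY. Then the following are equivalent: (i) marginal regression exactly reconstructs the support, i.e., there exists a threshold t > 0 such that for every j ∈ {1,…,p}, |α̂_j| ≥ t if and only if j ∈ S; (ii) Condition F (faithfulness) holds: max |C_NS β_S| < min |C_SS β_S|. -/
open Matrix

/-- In the noise-free model `Y = Xβ` with support `S = {j | β j ≠ 0}`,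
`1 ≤ s < p`, marginal regression (`α̂ = XᵀY`) exactly reconstructs the support for some
threshold `t > 0` if and only if Condition F (faithfulness) holds:
`max |C_NS β_S| < min |C_SS β_S|`, phrased here pairwise: every coordinate of `α̂` off the
support is strictly smaller in absolute value than every coordinate of `α̂` on the support. -/
theorem stmt_2 {n p : ℕ} (X : Matrix (Fin n) (Fin p) ℝ) (β : Fin p → ℝ)
    (hs1 : 1 ≤ Fintype.card {j : Fin p // β j ≠ 0})
    (hsp : Fintype.card {j : Fin p // β j ≠ 0} < p) :
    (∃ t : ℝ, 0 < t ∧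
      ∀ j, t ≤ |Xᵀ.mulVec (X.mulVec β) j| ↔ β j ≠ 0) ↔
    (∀ i, β i = 0 → ∀ j, β j ≠ 0 →
      |Xᵀ.mulVec (X.mulVec β) i| < |Xᵀ.mulVec (X.mulVec β) j|) := by
  generalize Xᵀ.mulVec (X.mulVec β) = a
  constructor
  · rintro ⟨t, _, h⟩ i hi j hj
    have h1 : ¬ t ≤ |a i| := fun hc => (h i).1 hc hi
    exact lt_of_lt_of_le (not_le.1 h1) ((h j).2 hj)
  · intro h
    have hne : Nonempty {j : Fin p // β j ≠ 0} := Fintype.card_pos_iff.1 hs1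
    obtain ⟨k, hk⟩ : ∃ k, β k = 0 := by
      by_contra! hc
      have h2 : Fintype.card {j : Fin p // β j ≠ 0} = Fintype.card (Fin p) :=
        Fintype.card_congr (Equiv.subtypeUnivEquiv hc)
      rw [Fintype.card_fin] at h2
      omega
    obtain ⟨m, hm⟩ := Finite.exists_min (fun j : {j : Fin p // β j ≠ 0} => |a j|)
    refine ⟨|a m|, lt_of_le_of_lt (abs_nonneg _) (h k hk m m.2), fun j => ⟨?_, ?_⟩⟩
    · intro hj h0
      exact absurd (h j h0 m m.2) (not_lt.2 hj)
    · intro hj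
      exact hm ⟨j, hj⟩
end

section
/- Consider a sequence indexed by n of noise-free regression models: Y⁽ⁿ⁾ = X⁽ⁿ⁾β⁽ⁿ⁾ with X⁽ⁿ⁾ an n×p⁽ⁿ⁾ matrix with unit-norm columns; ε_n ∈ (0,1); a_n > 0; π_n a probability distribution on ℝ whose support is contained in (−∞, −a_n] ∪ [a_n, ∞); and β⁽ⁿ⁾ = (β₁,…,β_{p⁽ⁿ⁾}) iid with law (1−ε_n)ν₀ + ε_n π_n, with S = {j : β_j ≠ 0}. Suppose Condition F'' holds: A_n(a_n/2, ε_n, ḡ⁽ⁿ⁾) → 0 as n → ∞. Then P( max_{i ∉ S} |(C⁽ⁿ⁾β⁽ⁿ⁾)_i| ≤ min_{i ∈ S} |(C⁽ⁿ⁾β⁽ⁿ⁾)_i| ) → 1 as n → ∞; that is, the Faithfulness Condition max |C_NS β_S| ≤ min |C_SS β_S| holds except on an event whose probability tends to 0. -/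
open Matrix MeasureTheory ProbabilityTheory Filter Topology

/-- `g_{ij}(t) = E_{u∼π}[exp(t u ⟨x_i, x_j⟩)] − 1`, where `x_i, x_j` are columns of `X`. -/
noncomputable def gfun {n p : ℕ} (X : Matrix (Fin n) (Fin p) ℝ) (π : Measure ℝ)
    (i j : Fin p) (t : ℝ) : ℝ :=
  (∫ u, Real.exp (t * u * ∑ k, X k i * X k j) ∂π) - 1

/-- `ḡ_i(t) = Σ_{j ≠ i} g_{ij}(t)`. -/
noncomputable def gbar {n p : ℕ} (X : Matrix (Fin n) (Fin p) ℝ) (π : Measure ℝ)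
    (i : Fin p) (t : ℝ) : ℝ :=
  ∑ j ∈ Finset.univ.erase i, gfun X π i j t

/-- `A(δ, ε, ḡ) = inf_{t > 0} e^{−δt} Σ_i [exp(ε ḡ_i(t)) + exp(ε ḡ_i(−t))]`. -/
noncomputable def Afun {n p : ℕ} (X : Matrix (Fin n) (Fin p) ℝ) (π : Measure ℝ)
    (δ ε : ℝ) : ℝ :=
  sInf ((fun t => Real.exp (-(δ * t)) *
    ∑ i, (Real.exp (ε * gbar X π i t) + Real.exp (ε * gbar X π i (-t)))) '' Set.Ioi 0)

/-- The mixture law `(1−ε) ν₀ + ε π`, `ν₀` the point mass at `0`. -/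
noncomputable def mixLaw (ε : ℝ) (π : Measure ℝ) : Measure ℝ :=
  ENNReal.ofReal (1 - ε) • Measure.dirac 0 + ENNReal.ofReal ε • π

lemma mixLaw_prob (ε : ℝ) (hε : ε ∈ Set.Ioo (0 : ℝ) 1) (π : Measure ℝ) [IsProbabilityMeasure π] :
    IsProbabilityMeasure (mixLaw ε π) := by
  constructor
  simp only [mixLaw, Measure.add_apply, Measure.smul_apply, measure_univ, smul_eq_mul, mul_one]
  rw [← ENNReal.ofReal_add (by linarith [hε.2]) hε.1.le]
  simp

lemma mgf_mix (ε : ℝ) (hε : ε ∈ Set.Ioo (0 : ℝ) 1) (π : Measure ℝ) [IsProbabilityMeasure π]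
    (t c : ℝ) (h : Integrable (fun u => Real.exp (t * u * c)) π) :
    ∫⁻ u, ENNReal.ofReal (Real.exp (t * u * c)) ∂(mixLaw ε π)
      ≤ ENNReal.ofReal (Real.exp (ε * ((∫ u, Real.exp (t * u * c) ∂π) - 1))) := by
  have hI : 0 ≤ ∫ u, Real.exp (t * u * c) ∂π := integral_nonneg fun u => (Real.exp_pos _).le
  rw [mixLaw, lintegral_add_measure, lintegral_smul_measure, lintegral_smul_measure,
    lintegral_dirac' _ (by fun_prop),
    ← ofReal_integral_eq_lintegral_ofReal h (ae_of_all _ fun u => (Real.exp_pos _).le)]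
  simp only [smul_eq_mul]
  rw [← ENNReal.ofReal_mul (by linarith [hε.2]), ← ENNReal.ofReal_mul hε.1.le,
    ← ENNReal.ofReal_add (mul_nonneg (by linarith [hε.2]) (Real.exp_pos _).le)
      (mul_nonneg hε.1.le hI)]
  apply ENNReal.ofReal_le_ofReal
  have := Real.add_one_le_exp (ε * ((∫ u, Real.exp (t * u * c) ∂π) - 1))
  simp only [mul_zero, zero_mul, Real.exp_zero]
  linarith

lemma chernoff {n p : ℕ} (X : Matrix (Fin n) (Fin p) ℝ)
    (ε : ℝ) (hε : ε ∈ Set.Ioo (0 : ℝ) 1) (π : Measure ℝ) [IsProbabilityMeasure π]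
    (hInt : ∀ (t : ℝ) (i j : Fin p), i ≠ j →
      Integrable (fun u => Real.exp (t * u * ∑ k, X k i * X k j)) π) (i : Fin p) (t δ : ℝ) :
    (Measure.pi fun _ : Fin p => mixLaw ε π)
      {b | δ ≤ ∑ j ∈ Finset.univ.erase i, t * b j * ∑ k, X k i * X k j}
      ≤ ENNReal.ofReal (Real.exp (-δ) * Real.exp (ε * gbar X π i t)) := by
  have := mixLaw_prob ε hε π
  set μ := Measure.pi fun _ : Fin p => mixLaw ε π with hμ
  have hind : iIndepFun (fun (j : Fin p) (b : Fin p → ℝ) =>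
      ENNReal.ofReal (Real.exp (t * b j * ∑ k, X k i * X k j))) μ :=
    iIndepFun_pi (μ := fun _ : Fin p => mixLaw ε π)
      (X := fun j (u : ℝ) => ENNReal.ofReal (Real.exp (t * u * ∑ k, X k i * X k j)))
      (fun j => by fun_prop)
  have h1 : ∫⁻ b, ∏ j ∈ Finset.univ.erase i,
      ENNReal.ofReal (Real.exp (t * b j * ∑ k, X k i * X k j)) ∂μ
      ≤ ENNReal.ofReal (Real.exp (ε * gbar X π i t)) := by
    rw [lintegral_prod_eq_prod_lintegral_of_indepFun _ _ hind (fun j => by fun_prop)]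
    rw [gbar, Finset.mul_sum, Real.exp_sum,
      ENNReal.ofReal_prod_of_nonneg (fun _ _ => (Real.exp_pos _).le)]
    refine Finset.prod_le_prod' fun j hj => ?_
    have hne : i ≠ j := (Finset.ne_of_mem_erase hj).symm
    have := (measurePreserving_eval (fun _ : Fin p => mixLaw ε π) j).lintegral_comp
      (f := fun u => ENNReal.ofReal (Real.exp (t * u * ∑ k, X k i * X k j))) (by fun_prop)
    simp only [Function.eval] at this
    rw [hμ, this]
    exact mgf_mix ε hε π t _ (hInt t i j hne)
  have h2 := meas_le_lintegral₀ (μ := μ) (f := fun b => ENNReal.ofReal (Real.exp (-δ)) *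
      ∏ j ∈ Finset.univ.erase i, ENNReal.ofReal (Real.exp (t * b j * ∑ k, X k i * X k j)))
      (s := {b | δ ≤ ∑ j ∈ Finset.univ.erase i, t * b j * ∑ k, X k i * X k j})
      (Measurable.aemeasurable (by fun_prop)) (by
        intro b hb
        rw [← ENNReal.ofReal_prod_of_nonneg (fun _ _ => (Real.exp_pos _).le), ← Real.exp_sum,
          ← ENNReal.ofReal_mul (Real.exp_pos _).le, ← Real.exp_add, ENNReal.one_le_ofReal,
          Real.one_le_exp_iff]
        have : δ ≤ _ := hb
        linarith)
  refine h2.trans ?_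
  rw [lintegral_const_mul _ (by fun_prop), ENNReal.ofReal_mul (Real.exp_pos _).le]
  gcongr

lemma mulVec_gram {n p : ℕ} (X : Matrix (Fin n) (Fin p) ℝ)
    (hcols : ∀ j, ∑ i, (X i j) ^ 2 = 1) (b : Fin p → ℝ) (i : Fin p) :
    (Xᵀ * X).mulVec b i = b i + ∑ j ∈ Finset.univ.erase i, b j * ∑ k, X k i * X k j := by
  have : (Xᵀ * X).mulVec b i = ∑ j, b j * ∑ k, X k i * X k j := by
    simp [Matrix.mulVec, dotProduct, Matrix.mul_apply, mul_comm]
  rw [this, ← Finset.add_sum_erase _ _ (Finset.mem_univ i)]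
  congr 1
  have h := hcols i
  simp only [pow_two] at h
  rw [h, mul_one]

lemma main_bound {n p : ℕ} (X : Matrix (Fin n) (Fin p) ℝ)
    (hcols : ∀ j, ∑ i, (X i j) ^ 2 = 1) (a : ℝ)
    (ε : ℝ) (hε : ε ∈ Set.Ioo (0 : ℝ) 1) (π : Measure ℝ) [IsProbabilityMeasure π]
    (hsupp : ∀ᵐ u ∂π, a ≤ |u|)
    (hInt : ∀ (t : ℝ) (i j : Fin p), i ≠ j →
      Integrable (fun u => Real.exp (t * u * ∑ k, X k i * X k j)) π) :
    1 - ENNReal.ofReal (Afun X π (a / 2) ε) ≤ (Measure.pi fun _ : Fin p => mixLaw ε π)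
        {b | ∀ i, b i = 0 → ∀ j, b j ≠ 0 →
          |(Xᵀ * X).mulVec b i| ≤ |(Xᵀ * X).mulVec b j|} := by
  have := mixLaw_prob ε hε π
  set μ := Measure.pi fun _ : Fin p => mixLaw ε π with hμ
  set E := {b : Fin p → ℝ | ∀ i, b i = 0 → ∀ j, b j ≠ 0 →
          |(Xᵀ * X).mulVec b i| ≤ |(Xᵀ * X).mulVec b j|} with hE
  have hmix : ∀ᵐ u ∂(mixLaw ε π), u ≠ 0 → a ≤ |u| := by
    rw [mixLaw, ae_add_measure_iff]
    refine ⟨Measure.ae_smul_measure ?_ _, Measure.ae_smul_measure ?_ _⟩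
    · rw [ae_dirac_eq]; simp
    · filter_upwards [hsupp] with u hu _ using hu
  have hae : ∀ᵐ b ∂μ, ∀ j, b j ≠ 0 → a ≤ |b j| := by
    rw [ae_all_iff]
    intro j
    exact (measurePreserving_eval (fun _ : Fin p => mixLaw ε π) j).quasiMeasurePreserving.ae hmix
  have hbad : ∀ t : ℝ, 0 < t → μ Eᶜ ≤ ENNReal.ofReal (Real.exp (-(a / 2 * t)) *
      ∑ i, (Real.exp (ε * gbar X π i t) + Real.exp (ε * gbar X π i (-t)))) := by
    intro t ht
    let B : Fin p → ℝ → Set (Fin p → ℝ) := fun i s =>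
      {b | a / 2 * t ≤ ∑ j ∈ Finset.univ.erase i, s * b j * ∑ k, X k i * X k j}
    have hsub : Eᶜ ≤ᵐ[μ] ⋃ i, (B i t ∪ B i (-t)) := by
      filter_upwards [hae] with b hb hbE
      by_contra hcon
      apply hbE
      have hW : ∀ i, |∑ j ∈ Finset.univ.erase i, b j * ∑ k, X k i * X k j| ≤ a / 2 := by
        intro i
        have hni : b ∉ B i t ∪ B i (-t) := fun h => hcon (Set.mem_iUnion.2 ⟨i, h⟩)
        simp only [B, Set.mem_union, Set.mem_setOf_eq, not_or, not_le, mul_assoc,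
          ← Finset.mul_sum] at hni
        obtain ⟨h1, h2⟩ := hni
        rw [abs_le]
        constructor <;> nlinarith
      intro i hi j hj
      rw [mulVec_gram X hcols, mulVec_gram X hcols, hi, zero_add]
      have h1 := hW i
      have h2 := hW j
      have h3 := hb j hj
      have h4 := abs_sub_abs_le_abs_add (b j)
        (∑ l ∈ Finset.univ.erase j, b l * ∑ k, X k j * X k l)
      linarith
    have hB : ∀ i s, μ (B i s) ≤ ENNReal.ofReal
        (Real.exp (-(a / 2 * t)) * Real.exp (ε * gbar X π i s)) := fun i s =>
      chernoff X ε hε π hInt i s _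
    calc μ Eᶜ ≤ μ (⋃ i, (B i t ∪ B i (-t))) := measure_mono_ae hsub
      _ ≤ ∑ i, μ (B i t ∪ B i (-t)) := measure_iUnion_fintype_le _ _
      _ ≤ ∑ i, ENNReal.ofReal (Real.exp (-(a / 2 * t)) *
          (Real.exp (ε * gbar X π i t) + Real.exp (ε * gbar X π i (-t)))) := by
          refine Finset.sum_le_sum fun i _ => (measure_union_le _ _).trans ?_
          rw [mul_add, ENNReal.ofReal_add (by positivity) (by positivity)]
          exact add_le_add (hB i t) (hB i (-t))
      _ = _ := by
          rw [← ENNReal.ofReal_sum_of_nonneg (fun _ _ => by positivity), ← Finset.mul_sum]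
  have hfin : μ Eᶜ ≤ ENNReal.ofReal (Afun X π (a / 2) ε) := by
    rw [← ENNReal.ofReal_toReal (measure_ne_top μ Eᶜ)]
    apply ENNReal.ofReal_le_ofReal
    refine le_csInf (Set.Nonempty.image _ ⟨1, Set.mem_Ioi.2 one_pos⟩) ?_
    rintro _ ⟨t, ht, rfl⟩
    exact ENNReal.toReal_le_of_le_ofReal (by positivity) (hbad t ht)
  rw [tsub_le_iff_right]
  calc (1 : ENNReal) = μ (E ∪ Eᶜ) := by simp
    _ ≤ μ E + μ Eᶜ := measure_union_le _ _
    _ ≤ _ := by gcongr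

/-- Theorem 4 of the paper. For a sequence of noise-free models with
unit-norm design columns, coefficients iid `(1−ε_n)ν₀ + ε_n π_n` where `π_n` is supported in
`(−∞, −a_n] ∪ [a_n, ∞)`, if Condition F'' holds (`A_n(a_n/2, ε_n, ḡ⁽ⁿ⁾) → 0`), then with
probability tending to one the Faithfulness Condition `max |C_NS β_S| ≤ min |C_SS β_S|`
holds (phrased pairwise via the Gram matrix `C = XᵀX`). -/
theorem stmt_6 (p : ℕ → ℕ) (X : ∀ n, Matrix (Fin n) (Fin (p n)) ℝ)
    (hcols : ∀ n j, ∑ i, (X n i j) ^ 2 = 1)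
    (a : ℕ → ℝ) (ha : ∀ n, 0 < a n)
    (ε : ℕ → ℝ) (hε : ∀ n, ε n ∈ Set.Ioo (0 : ℝ) 1)
    (π : ℕ → Measure ℝ) (hπ : ∀ n, IsProbabilityMeasure (π n))
    (hsupp : ∀ n, ∀ᵐ u ∂(π n), a n ≤ |u|)
    (hInt : ∀ n (t : ℝ) (i j : Fin (p n)), i ≠ j →
      Integrable (fun u => Real.exp (t * u * ∑ k, X n k i * X n k j)) (π n))
    (hA : Tendsto (fun n => Afun (X n) (π n) (a n / 2) (ε n)) atTop (𝓝 0)) :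
    Tendsto
      (fun n => (Measure.pi fun _ : Fin (p n) => mixLaw (ε n) (π n))
        {b | ∀ i, b i = 0 → ∀ j, b j ≠ 0 →
          |((X n)ᵀ * X n).mulVec b i| ≤ |((X n)ᵀ * X n).mulVec b j|})
      atTop (𝓝 1) := by
  have hlow : Tendsto (fun n => 1 - ENNReal.ofReal (Afun (X n) (π n) (a n / 2) (ε n))) atTop
      (𝓝 1) := by
    have h := ENNReal.Tendsto.sub (tendsto_const_nhds (x := (1 : ENNReal)) (f := atTop))
      (ENNReal.tendsto_ofReal hA) (Or.inl ENNReal.one_ne_top)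
    simpa using h
  refine tendsto_of_tendsto_of_tendsto_of_le_of_le hlow tendsto_const_nhds ?_ ?_
  · intro n
    have := hπ n
    exact main_bound (X n) (hcols n) (a n) (ε n) (hε n) (π n) (hsupp n) (hInt n)
  · intro n
    have := hπ n
    have := mixLaw_prob (ε n) (hε n) (π n)
    exact prob_le_one
end

section
/- Fix ϑ ∈ (0,1), θ > 0, and r > 0 with θ > 2(1−ϑ). Consider the sequence of random-design regression models: the entries of the n×p design matrix X are iid N(0, 1/n); independently, the coordinates of β ∈ ℝ^p are iid with law (1−ε_n)ν₀ + ε_n ν_{τ_n}; independently, z ~ N(0, I_n); and Y = Xβ + z; where p = p_n → ∞, n = p^θ (that is, log n / log p → θ), ε_n = p^{−ϑ}, and τ_n = √(2 r log p). Then for any sequence of measurable variable selection procedures β̂⁽ⁿ⁾ : ℝⁿ × ℝ^{n×p} → ℝ^p, the expected Hamming distance d*_n = E[ Σ_{j=1}^p 1{ sgn(β̂⁽ⁿ⁾_j(Y,X)) ≠ sgn(β_j) } ] satisfies: if r ≥ ϑ, then for every δ > 0, d*_n ≥ p^{1 − (ϑ+r)²/(4r) − δ} for all sufficiently large n; and if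 0 < r < ϑ, then liminf_n d*_n / p^{1−ϑ} ≥ 1. -/
open MeasureTheory ProbabilityTheory Filter Topology

open scoped ENNReal NNReal

/-- Law of the `n × p` design matrix with iid `N(0, 1/n)` entries. -/
noncomputable def designLaw (n p : ℕ) : Measure (Fin n → Fin p → ℝ) :=
  Measure.pi fun _ => Measure.pi fun _ => gaussianReal 0 (n : ℝ≥0)⁻¹

/-- Law of the coefficient vector: iid coordinates with law `(1−ε) ν₀ + ε ν_τ`. -/
noncomputable def signalLaw (p : ℕ) (ε τ : ℝ) : Measure (Fin p → ℝ) :=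
  Measure.pi fun _ =>
    (ENNReal.ofReal (1 - ε) • Measure.dirac (0 : ℝ) + ENNReal.ofReal ε • Measure.dirac τ)

/-- Law of the noise vector: `N(0, I_n)`. -/
noncomputable def noiseLaw (n : ℕ) : Measure (Fin n → ℝ) :=
  Measure.pi fun _ => gaussianReal 0 1

/-- Joint law of `(X, β, z)` (mutually independent). -/
noncomputable def jointLaw (n p : ℕ) (ε τ : ℝ) :
    Measure ((Fin n → Fin p → ℝ) × (Fin p → ℝ) × (Fin n → ℝ)) :=
  (designLaw n p).prod ((signalLaw p ε τ).prod (noiseLaw n))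

/-- The response `Y = Xβ + z` as a function of `ω = (X, β, z)`. -/
noncomputable def resp {n p : ℕ} (ω : (Fin n → Fin p → ℝ) × (Fin p → ℝ) × (Fin n → ℝ)) :
    Fin n → ℝ :=
  fun i => (∑ j, ω.1 i j * ω.2.1 j) + ω.2.2 i

/-- The expected Hamming distance `d*_n = E[Σ_j 1{sgn(β̂_j(Y,X)) ≠ sgn(β_j)}]` of a variable
selection procedure `est`, computed as the sum of the per-coordinate error probabilities. -/
noncomputable def expHamming (n pn : ℕ) (ε τ : ℝ)
    (est : (Fin n → ℝ) → (Fin n → Fin pn → ℝ) → Fin pn → ℝ) : ℝ≥0∞ :=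
  ∑ j, jointLaw n pn ε τ
    {ω | Real.sign (est (resp ω) ω.1 j) ≠ Real.sign (ω.2.1 j)}

lemma gauss_shift_one (a : ℝ) {s : Set ℝ} (hs : MeasurableSet s) :
    ∫⁻ x, ENNReal.ofReal (Real.exp (-(a * x) - a ^ 2 / 2)) * s.indicator 1 (x + a)
      ∂(gaussianReal 0 1) = gaussianReal 0 1 s := by
  have hg : Measurable fun x : ℝ => ENNReal.ofReal (Real.exp (-(a * x) - a ^ 2 / 2)) *
      s.indicator (1 : ℝ → ℝ≥0∞) (x + a) :=
    (by fun_prop : Measurable fun x : ℝ => ENNReal.ofReal (Real.exp (-(a * x) - a ^ 2 / 2))).mul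
      ((measurable_one.indicator hs).comp (measurable_add_const a))
  rw [gaussianReal_of_var_ne_zero _ one_ne_zero, lintegral_withDensity_eq_lintegral_mul _
    (measurable_gaussianPDF _ _) hg]
  rw [withDensity_apply _ hs, ← lintegral_indicator hs,
    ← lintegral_add_right_eq_self (μ := volume) (s.indicator (gaussianPDF 0 1)) a]
  classical
  refine lintegral_congr fun x => ?_
  simp only [Pi.mul_apply, Set.indicator_apply, Pi.one_apply]
  split_ifs
  · rw [mul_one, gaussianPDF, gaussianPDF, ← ENNReal.ofReal_mul (gaussianPDFReal_nonneg _ _ _)]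
    congr 1
    simp only [gaussianPDFReal, mul_assoc, ← Real.exp_add]
    congr 3
    simp
    ring
  · simp

lemma gauss_shift (n : ℕ) (v : Fin n → ℝ) {A : Set (Fin n → ℝ)} (hA : MeasurableSet A) :
    ∫⁻ z, ENNReal.ofReal (Real.exp (∑ i, (-(v i * z i) - v i ^ 2 / 2))) * A.indicator 1 (z + v)
      ∂(noiseLaw n) = noiseLaw n A := by
  set w : (Fin n → ℝ) → ℝ≥0∞ :=
    fun z => ENNReal.ofReal (Real.exp (∑ i, (-(v i * z i) - v i ^ 2 / 2))) with hw
  have hwm : Measurable w := by fun_prop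
  have hm : Measurable fun z : Fin n → ℝ => z + v := measurable_add_const v
  have key : ∀ A : Set (Fin n → ℝ), MeasurableSet A →
      (((noiseLaw n).withDensity w).map (fun z => z + v)) A =
      ∫⁻ z, w z * A.indicator 1 (z + v) ∂(noiseLaw n) := by
    intro A hA
    rw [Measure.map_apply hm hA, withDensity_apply _ (hm hA), ← lintegral_indicator (hm hA)]
    refine lintegral_congr fun z => ?_
    by_cases h : z + v ∈ A <;> simp [Set.indicator_apply, h]
  rw [← key A hA]
  congr 1
  symm
  unfold noiseLaw
  refine Measure.pi_eq fun s hs => ?_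
  have := key (Set.univ.pi s) (MeasurableSet.univ_pi hs)
  unfold noiseLaw at this
  rw [this]
  have h2 : ∀ z : Fin n → ℝ, w z * (Set.univ.pi s).indicator 1 (z + v) =
      ∏ i, (ENNReal.ofReal (Real.exp (-(v i * z i) - v i ^ 2 / 2)) *
        (s i).indicator 1 (z i + v i)) := by
    intro z
    rw [Finset.prod_mul_distrib, hw, ← ENNReal.ofReal_prod_of_nonneg (fun i _ => (Real.exp_pos _).le),
      ← Real.exp_sum]
    congr 1
    by_cases h : z + v ∈ Set.univ.pi s
    · rw [Set.indicator_of_mem h, Finset.prod_eq_one]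
      · rfl
      · intro i _
        exact Set.indicator_of_mem (h i trivial) _
    · rw [Set.indicator_of_notMem h]
      simp only [Set.mem_pi, Set.mem_univ, true_implies, not_forall] at h
      obtain ⟨i, hi⟩ := h
      exact (Finset.prod_eq_zero (Finset.mem_univ i) (Set.indicator_of_notMem hi _)).symm
  simp_rw [h2]
  have hfm : ∀ i, Measurable fun x : ℝ => ENNReal.ofReal (Real.exp (-(v i * x) - v i ^ 2 / 2)) *
        (s i).indicator (1 : ℝ → ℝ≥0∞) (x + v i) := fun i =>
    (by fun_prop : Measurable fun x : ℝ => ENNReal.ofReal (Real.exp (-(v i * x) - v i ^ 2 / 2))).mul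
      ((measurable_one.indicator (hs i)).comp (measurable_add_const (v i)))
  have hind := iIndepFun_pi (μ := fun _ : Fin n => gaussianReal 0 1) (fun i => (hfm i).aemeasurable)
  have := lintegral_prod_eq_prod_lintegral_of_indepFun Finset.univ _ hind
    (fun i => (hfm i).comp (measurable_pi_apply i))
  rw [this]
  refine Finset.prod_congr rfl fun i _ => ?_
  rw [← gauss_shift_one (v i) (hs i)]
  exact (measurePreserving_eval (fun _ : Fin n => gaussianReal 0 1) i).lintegral_comp (hfm i)

lemma noise_ineq (n : ℕ) (v : Fin n → ℝ) {ε : ℝ} (hε : 0 ≤ ε) (hε1 : ε ≤ 1) {A B G : Set (Fin n → ℝ)}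
    (hA : MeasurableSet A)
    (hG : ∀ z ∈ G, ε ≤ Real.exp (∑ i, (-(v i * z i) - v i ^ 2 / 2)))
    (hGm : MeasurableSet G)
    (hAB : ∀ z, z + v ∈ A ∨ z ∈ B) :
    ENNReal.ofReal (1 - ε) * ENNReal.ofReal ε * noiseLaw n G ≤
      ENNReal.ofReal (1 - ε) * noiseLaw n A + ENNReal.ofReal ε * noiseLaw n B := by
  have hm : Measurable fun z : Fin n → ℝ => z + v := measurable_add_const v
  have h1 : ENNReal.ofReal ε * noiseLaw n (G ∩ (fun z => z + v) ⁻¹' A) ≤ noiseLaw n A := by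
    rw [← gauss_shift n v hA, ← lintegral_indicator_const (hGm.inter (hm hA))]
    refine lintegral_mono fun z => ?_
    by_cases h : z ∈ G ∩ (fun z => z + v) ⁻¹' A
    · rw [Set.indicator_of_mem h, Set.indicator_of_mem (show z + v ∈ A from h.2)]
      simpa using ENNReal.ofReal_le_ofReal (hG z h.1)
    · rw [Set.indicator_of_notMem h]; exact zero_le
  have h2 : noiseLaw n G ≤ noiseLaw n (G ∩ (fun z => z + v) ⁻¹' A) + noiseLaw n B := by
    refine (measure_mono ?_).trans (measure_union_le _ _)
    intro z hz
    rcases hAB z with h | h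
    · exact Or.inl ⟨hz, h⟩
    · exact Or.inr h
  calc _ ≤ ENNReal.ofReal (1 - ε) * ENNReal.ofReal ε *
        (noiseLaw n (G ∩ (fun z => z + v) ⁻¹' A) + noiseLaw n B) := by gcongr
    _ = ENNReal.ofReal (1 - ε) * (ENNReal.ofReal ε * noiseLaw n (G ∩ (fun z => z + v) ⁻¹' A)) +
        ENNReal.ofReal (1 - ε) * (ENNReal.ofReal ε * noiseLaw n B) := by ring
    _ ≤ ENNReal.ofReal (1 - ε) * noiseLaw n A + 1 * (ENNReal.ofReal ε * noiseLaw n B) := by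
        gcongr
        exact ENNReal.ofReal_le_one.2 (by linarith)
    _ = _ := by rw [one_mul]

lemma noise_lin (n : ℕ) (x : Fin n → ℝ) :
    (noiseLaw n).map (fun z => ∑ i, x i * z i) = gaussianReal 0 (Real.toNNReal (∑ i, x i ^ 2)) := by
  have e : (noiseLaw n).map (fun z => ∑ i, x i * z i) =
      (Measure.pi fun i => gaussianReal 0 (NNReal.mk (x i ^ 2) (sq_nonneg _))).map (fun z => ∑ i, z i) := by
    have : (Measure.pi fun i => gaussianReal 0 (NNReal.mk (x i ^ 2) (sq_nonneg _))) =
        (noiseLaw n).map (fun z i => x i * z i) := by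
      unfold noiseLaw
      rw [Measure.pi_map_pi (f := fun i y => x i * y) (fun i => by fun_prop)]
      congr 1
      ext1 i
      rw [gaussianReal_map_const_mul]
      simp
    rw [this, Measure.map_map (by fun_prop) (by fun_prop)]
    rfl
  rw [e]
  have : IsProbabilityMeasure ((Measure.pi fun i =>
      gaussianReal 0 (NNReal.mk (x i ^ 2) (sq_nonneg _))).map (fun z => ∑ i, z i)) :=
    Measure.isProbabilityMeasure_map (by fun_prop)
  apply Measure.ext_of_charFun
  rw [charFun_map_sum_pi_eq_prod]
  ext t
  simp only [Finset.prod_apply, charFun_gaussianReal, ← Complex.exp_sum]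
  congr 1
  have hs : 0 ≤ ∑ i, x i ^ 2 := Finset.sum_nonneg fun i _ => sq_nonneg _
  have : ((Real.toNNReal (∑ i, x i ^ 2) : ℝ≥0) : ℂ) = ((∑ i, x i ^ 2 : ℝ) : ℂ) := by
    rw [← Complex.ofReal_inj.2 (Real.coe_toNNReal _ hs)]
  rw [this]
  push_cast
  simp [Finset.sum_mul, Finset.sum_div]

lemma signal_split (p : ℕ) {ε τ : ℝ} (hε : 0 ≤ ε) (hε1 : ε ≤ 1) (j : Fin p)
    {F : (Fin p → ℝ) → ℝ≥0∞} (hF : Measurable F) :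
    ∫⁻ β, F β ∂(signalLaw p ε τ) = ∫⁻ β, (ENNReal.ofReal (1 - ε) * F (Function.update β j 0) +
      ENNReal.ofReal ε * F (Function.update β j τ)) ∂(signalLaw p ε τ) := by
  set ν : Measure ℝ :=
    (ENNReal.ofReal (1 - ε) • Measure.dirac (0 : ℝ) + ENNReal.ofReal ε • Measure.dirac τ) with hν
  have hsum : ENNReal.ofReal (1 - ε) + ENNReal.ofReal ε = 1 := by
    rw [← ENNReal.ofReal_add (by linarith) hε]; simp
  have : IsProbabilityMeasure ν := ⟨by simp [hν, hsum]⟩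
  have hlint : ∀ f : ℝ → ℝ≥0∞, ∫⁻ b, f b ∂ν = ENNReal.ofReal (1 - ε) * f 0 + ENNReal.ofReal ε * f τ := by
    intro f; simp [hν, lintegral_add_measure, lintegral_smul_measure]
  have hu : ∀ b : ℝ, Measurable fun β : Fin p → ℝ => Function.update β j b := fun b => by fun_prop
  unfold signalLaw
  refine lintegral_eq_of_lmarginal_eq (μ := fun _ : Fin p => ν) {j} hF ?_ ?_
  · exact ((hF.comp (hu 0)).const_mul _).add ((hF.comp (hu τ)).const_mul _)
  · rw [lmarginal_singleton, lmarginal_singleton]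
    ext β
    simp only [Function.update_idem, hlint, lintegral_const, ← add_mul, hsum]
    simp [hsum, ← add_mul]

instance design_prob (n p : ℕ) : IsProbabilityMeasure (designLaw n p) := by
  unfold designLaw; infer_instance
instance noise_prob (n : ℕ) : IsProbabilityMeasure (noiseLaw n) := by
  unfold noiseLaw; infer_instance
lemma signal_prob (p : ℕ) {ε τ : ℝ} (hε : 0 ≤ ε) (hε1 : ε ≤ 1)  :
    IsProbabilityMeasure (signalLaw p ε τ) := by
  unfold signalLaw
  have hsum : ENNReal.ofReal (1 - ε) + ENNReal.ofReal ε = 1 := by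
    rw [← ENNReal.ofReal_add (by linarith) hε]; simp
  have : IsProbabilityMeasure (ENNReal.ofReal (1 - ε) • Measure.dirac (0 : ℝ) + ENNReal.ofReal ε • Measure.dirac τ) := ⟨by simp [hsum]⟩
  infer_instance

/-- variance of a squared standard gaussian -/
noncomputable def cVar : ℝ := Var[fun x => x ^ 2; gaussianReal 0 1]

lemma memLp_sq (v : ℝ≥0) : MemLp (fun x : ℝ => x ^ 2) 2 (gaussianReal 0 v) := by
  have := memLp_id_gaussianReal (μ := 0) (v := v) 4
  rw [memLp_two_iff_integrable_sq (by fun_prop)]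
  have := this.integrable_norm_pow (by norm_num)
  refine this.congr (ae_of_all _ fun x => ?_)
  simp [Real.norm_eq_abs]
  rw [← pow_mul]; exact Even.pow_abs (by decide) x

lemma var_sq (n : ℕ) : Var[fun x => x ^ 2; gaussianReal 0 (n : ℝ≥0)⁻¹] = cVar / n ^ 2 := by
  have h : gaussianReal 0 (n : ℝ≥0)⁻¹ = (gaussianReal 0 1).map (fun x => (√(n:ℝ))⁻¹ * x) := by
    rw [gaussianReal_map_const_mul]
    congr 1
    · simp
    · ext; simp
  rw [h, variance_map (by fun_prop) (by fun_prop)]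
  have : ((fun x : ℝ => x ^ 2) ∘ fun x => (√(n:ℝ))⁻¹ * x) = fun x => (n:ℝ)⁻¹ * x ^ 2 := by
    ext x; simp [mul_pow]
  rw [this, variance_const_mul, cVar]
  ring

lemma design_conc (n p : ℕ) (hn : 0 < n) (j : Fin p) {η : ℝ} (hη : 0 < η) :
    ENNReal.ofReal (1 - cVar / n / η ^ 2) ≤
      designLaw n p {X | |∑ i, X i j ^ 2 - 1| < η} := by
  set μ := Measure.pi fun _ : Fin n => gaussianReal 0 (n : ℝ≥0)⁻¹ with hμ
  have hn' : (n : ℝ) ≠ 0 := by positivity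
  have h1 : (designLaw n p).map (fun X i => X i j) = μ := by
    unfold designLaw
    rw [Measure.pi_map_pi (f := fun _ (y : Fin p → ℝ) => y j) (fun i => (measurable_pi_apply j).aemeasurable)]
    congr 1
    ext1 i
    exact (measurePreserving_eval (fun _ : Fin p => gaussianReal 0 (n : ℝ≥0)⁻¹) j).map_eq
  have hms : MeasurableSet {x : Fin n → ℝ | |∑ i, x i ^ 2 - 1| < η} :=
    measurableSet_lt (by fun_prop) (by fun_prop)
  have h2 : designLaw n p {X | |∑ i, X i j ^ 2 - 1| < η} = μ {x | |∑ i, x i ^ 2 - 1| < η} := by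
    rw [← h1, Measure.map_apply (by fun_prop) hms]; rfl
  rw [h2]
  have hmi : ∀ i : Fin n, MemLp (fun x : Fin n → ℝ => x i ^ 2) 2 μ := fun i =>
    (memLp_sq _).comp_measurePreserving (measurePreserving_eval _ i)
  have hmem : MemLp (∑ i, fun x : Fin n → ℝ => x i ^ 2) 2 μ := memLp_finsetSum' _ fun i _ => hmi i
  have hvar : Var[∑ i, fun x : Fin n → ℝ => x i ^ 2; μ] = cVar / n := by
    rw [hμ, variance_sum_pi (X := fun _ y => y ^ 2) (fun i => memLp_sq _)]
    simp only [var_sq, Finset.sum_const, Finset.card_univ, Fintype.card_fin, nsmul_eq_mul]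
    field_simp
  have hmean : ∫ x, (∑ i, fun x : Fin n → ℝ => x i ^ 2) x ∂μ = 1 := by
    simp only [Finset.sum_apply]
    rw [integral_finsetSum _ fun i _ => (hmi i).integrable (by norm_num)]
    have : ∀ i : Fin n, ∫ x, x i ^ 2 ∂μ = (n : ℝ)⁻¹ := by
      intro i
      have := integral_comp_eval (μ := fun _ : Fin n => gaussianReal 0 (n : ℝ≥0)⁻¹) (i := i)
        (f := fun y : ℝ => y ^ 2) (by fun_prop)
      rw [← hμ] at this
      rw [this]
      have h3 := variance_fun_id_gaussianReal (μ := 0) (v := (n : ℝ≥0)⁻¹)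
      rw [variance_eq_integral (by fun_prop)] at h3
      simpa using h3
    simp [this, hn']
  have hch := meas_ge_le_variance_div_sq hmem hη
  rw [hvar, hmean] at hch
  have : {x : Fin n → ℝ | |∑ i, x i ^ 2 - 1| < η} =
      {x | η ≤ |(∑ i, fun x : Fin n → ℝ => x i ^ 2) x - 1|}ᶜ := by
    ext x; simp [Finset.sum_apply]
  rw [this, prob_compl_eq_one_sub (by rw [← MeasurableSet.compl_iff, ← this]; exact hms)]
  rw [ENNReal.ofReal_sub _ (by rw [← hvar]; exact div_nonneg (variance_nonneg _ _) (sq_nonneg _)),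
    ENNReal.ofReal_one]
  exact tsub_le_tsub_left hch _

lemma measurable_rsign : Measurable Real.sign := by
  have : Real.sign = fun r : ℝ => if r < 0 then (-1 : ℝ) else if 0 < r then 1 else 0 := by
    ext r; rfl
  rw [this]
  exact Measurable.ite measurableSet_Iio measurable_const
    (Measurable.ite measurableSet_Ioi measurable_const measurable_const)

lemma coord_bound (n p : ℕ) {ε τ ℓ : ℝ} (hε : ε = Real.exp (-ℓ)) (hε1 : ε ≤ 1) (hτ : 0 < τ)
    (est : (Fin n → ℝ) → (Fin n → Fin p → ℝ) → Fin p → ℝ)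
    (hest : Measurable fun yx : (Fin n → ℝ) × (Fin n → Fin p → ℝ) => est yx.1 yx.2)
    (j : Fin p) :
    ∫⁻ X, ENNReal.ofReal (1 - ε) * ENNReal.ofReal ε *
      noiseLaw n {z | τ * (∑ i, X i j * z i) + τ ^ 2 * (∑ i, X i j ^ 2) / 2 ≤ ℓ} ∂(designLaw n p)
    ≤ jointLaw n p ε τ {ω | Real.sign (est (resp ω) ω.1 j) ≠ Real.sign (ω.2.1 j)} := by
  have hε0 : 0 ≤ ε := hε ▸ (Real.exp_pos _).le
  have := signal_prob p (τ := τ) hε0 hε1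
  set E := {ω : (Fin n → Fin p → ℝ) × (Fin p → ℝ) × (Fin n → ℝ) |
    Real.sign (est (resp ω) ω.1 j) ≠ Real.sign (ω.2.1 j)} with hE
  have hresp : Measurable fun ω : (Fin n → Fin p → ℝ) × (Fin p → ℝ) × (Fin n → ℝ) => resp ω := by
    unfold resp; fun_prop
  have hest' : Measurable fun ω : (Fin n → Fin p → ℝ) × (Fin p → ℝ) × (Fin n → ℝ) =>
      est (resp ω) ω.1 j :=
    (measurable_pi_apply j).comp (hest.comp (hresp.prodMk measurable_fst))
  have hEm : MeasurableSet E := by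
    refine (measurableSet_eq_fun (measurable_rsign.comp hest') (measurable_rsign.comp ?_)).compl
    fun_prop
  unfold jointLaw
  rw [Measure.prod_apply hEm]
  refine lintegral_mono fun X => ?_
  have hEX : MeasurableSet (Prod.mk X ⁻¹' E) := measurable_prodMk_left hEm
  rw [Measure.prod_apply hEX, signal_split p hε0 hε1 j (measurable_measure_prodMk_left hEX)]
  set G := {z : Fin n → ℝ | τ * (∑ i, X i j * z i) + τ ^ 2 * (∑ i, X i j ^ 2) / 2 ≤ ℓ} with hG
  have hGm : MeasurableSet G := measurableSet_le (by fun_prop) (by fun_prop)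
  calc ENNReal.ofReal (1 - ε) * ENNReal.ofReal ε * noiseLaw n G
      = ∫⁻ β, ENNReal.ofReal (1 - ε) * ENNReal.ofReal ε * noiseLaw n G ∂(signalLaw p ε τ) := by simp
    _ ≤ _ := by
      refine lintegral_mono fun β => ?_
      refine noise_ineq n (fun i => τ * X i j) hε0 hε1 ?_ ?_ hGm ?_
      · exact measurable_prodMk_left hEX
      · intro z hz
        rw [hε]
        refine Real.exp_le_exp.2 ?_
        have hz' : τ * (∑ i, X i j * z i) + τ ^ 2 * (∑ i, X i j ^ 2) / 2 ≤ ℓ := hz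
        have : ∑ i, (-(τ * X i j * z i) - (τ * X i j) ^ 2 / 2) =
            -(τ * (∑ i, X i j * z i) + τ ^ 2 * (∑ i, X i j ^ 2) / 2) := by
          rw [Finset.mul_sum, Finset.mul_sum, Finset.sum_div, ← Finset.sum_add_distrib,
            ← Finset.sum_neg_distrib]
          exact Finset.sum_congr rfl fun i _ => by ring
        rw [this]
        linarith
      · intro z
        have hr : resp (X, Function.update β j 0, z + fun i => τ * X i j) =
            resp (X, Function.update β j τ, z) := by
          ext i
          simp only [resp, Pi.add_apply]
          have h0 : ∀ b : ℝ, ∑ k, X i k * Function.update β j b k =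
              X i j * b + ∑ k ∈ Finset.univ.erase j, X i k * β k := by
            intro b
            rw [← Finset.add_sum_erase _ _ (Finset.mem_univ j)]
            congr 1
            · simp
            · refine Finset.sum_congr rfl fun k hk => ?_
              rw [Function.update_of_ne (Finset.ne_of_mem_erase hk)]
          rw [h0, h0]; ring
        simp only [hE, Set.mem_preimage, Set.mem_setOf_eq, hr, Function.update_self, Real.sign_zero,
          Real.sign_of_pos hτ]
        by_cases h : Real.sign (est (resp (X, Function.update β j τ, z)) X j) = 0
        · right; rw [h]; norm_num
        · left; exact h

lemma hamming_bound (n p : ℕ) (hn : 0 < n) {ε τ ℓ η : ℝ} (hε : ε = Real.exp (-ℓ)) (hε1 : ε ≤ 1)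
    (hτ : 0 < τ) (hη : 0 < η)
    (est : (Fin n → ℝ) → (Fin n → Fin p → ℝ) → Fin p → ℝ)
    (hest : Measurable fun yx : (Fin n → ℝ) × (Fin n → Fin p → ℝ) => est yx.1 yx.2)
    {c : ℝ} (hc : ∀ v : ℝ≥0, |(v : ℝ) - 1| < η →
      ENNReal.ofReal c ≤ gaussianReal 0 v {y | τ * y + τ ^ 2 * v / 2 ≤ ℓ}) :
    (p : ℝ≥0∞) * (ENNReal.ofReal (1 - ε) * ENNReal.ofReal ε *
      (ENNReal.ofReal c * ENNReal.ofReal (1 - cVar / n / η ^ 2))) ≤ expHamming n p ε τ est := by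
  unfold expHamming
  have : (p : ℝ≥0∞) * (ENNReal.ofReal (1 - ε) * ENNReal.ofReal ε *
      (ENNReal.ofReal c * ENNReal.ofReal (1 - cVar / n / η ^ 2))) =
      ∑ j : Fin p, (ENNReal.ofReal (1 - ε) * ENNReal.ofReal ε *
      (ENNReal.ofReal c * ENNReal.ofReal (1 - cVar / n / η ^ 2))) := by simp
  rw [this]
  refine Finset.sum_le_sum fun j _ => ?_
  refine le_trans ?_ (coord_bound n p hε hε1 hτ est hest j)
  rw [lintegral_const_mul' _ _ (ENNReal.mul_ne_top ENNReal.ofReal_ne_top ENNReal.ofReal_ne_top)]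
  gcongr
  have hS : MeasurableSet {X : Fin n → Fin p → ℝ | |∑ i, X i j ^ 2 - 1| < η} :=
    measurableSet_lt (by fun_prop) (by fun_prop)
  calc ENNReal.ofReal c * ENNReal.ofReal (1 - cVar / n / η ^ 2)
      ≤ ENNReal.ofReal c * designLaw n p {X | |∑ i, X i j ^ 2 - 1| < η} := by
        gcongr; exact design_conc n p hn j hη
    _ = ∫⁻ X, {X : Fin n → Fin p → ℝ | |∑ i, X i j ^ 2 - 1| < η}.indicator
          (fun _ => ENNReal.ofReal c) X ∂(designLaw n p) := (lintegral_indicator_const hS _).symm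
    _ ≤ _ := by
      refine lintegral_mono fun X => ?_
      by_cases h : |∑ i, X i j ^ 2 - 1| < η
      · rw [Set.indicator_of_mem (show X ∈ {X : Fin n → Fin p → ℝ | |∑ i, X i j ^ 2 - 1| < η} from h)]
        have hs : 0 ≤ ∑ i, X i j ^ 2 := Finset.sum_nonneg fun i _ => sq_nonneg _
        have h1 := hc (Real.toNNReal (∑ i, X i j ^ 2)) (by rwa [Real.coe_toNNReal _ hs])
        rw [← noise_lin n (fun i => X i j), Measure.map_apply (by fun_prop)
          (measurableSet_le (by fun_prop) (by fun_prop)), Real.coe_toNNReal _ hs] at h1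
        exact h1
      · rw [Set.indicator_of_notMem (by exact h)]; exact zero_le

lemma gauss_cheb {v : ℝ≥0} {t : ℝ} (ht : 0 < t) :
    ENNReal.ofReal (1 - v / t ^ 2) ≤ gaussianReal 0 v {y | y ≤ t} := by
  have hch := meas_ge_le_variance_div_sq (memLp_id_gaussianReal (μ := 0) (v := v) 2) ht
  rw [variance_id_gaussianReal] at hch
  simp only [id, integral_id_gaussianReal, sub_zero] at hch
  have h1 : gaussianReal 0 v {y | y ≤ t}ᶜ ≤ ENNReal.ofReal (v / t ^ 2) := by
    refine (measure_mono ?_).trans hch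
    intro y hy
    simp only [Set.mem_compl_iff, Set.mem_setOf_eq, not_le] at hy ⊢
    exact hy.le.trans (le_abs_self y)
  have hm : MeasurableSet {y : ℝ | y ≤ t} := measurableSet_Iic
  rw [ENNReal.ofReal_sub _ (by positivity), ENNReal.ofReal_one, tsub_le_iff_right]
  calc (1 : ℝ≥0∞) = gaussianReal 0 v {y | y ≤ t} + gaussianReal 0 v {y | y ≤ t}ᶜ := by
        rw [measure_add_measure_compl hm]; simp
    _ ≤ _ := by gcongr

lemma gauss_tail {v : ℝ≥0} {a lo hi : ℝ} (ha : 0 ≤ a) (hlo : 0 < lo) (h1 : lo ≤ v) (h2 : v ≤ hi) :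
    ENNReal.ofReal ((√(2 * Real.pi * hi))⁻¹ * Real.exp (-(a + 1) ^ 2 / (2 * lo))) ≤
      gaussianReal 0 v {y | y ≤ -a} := by
  have hv : (0 : ℝ) < v := hlo.trans_le h1
  have hv0 : v ≠ 0 := fun h => by simp [h] at hv
  calc _ = ∫⁻ y in Set.Icc (-a - 1) (-a),
        ENNReal.ofReal ((√(2 * Real.pi * hi))⁻¹ * Real.exp (-(a + 1) ^ 2 / (2 * lo))) := by
        simp
    _ ≤ ∫⁻ y in Set.Icc (-a - 1) (-a), gaussianPDF 0 v y := by
        refine setLIntegral_mono (measurable_gaussianPDF _ _) fun y hy => ?_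
        refine ENNReal.ofReal_le_ofReal ?_
        unfold gaussianPDFReal
        have hy2 : (y - 0) ^ 2 ≤ (a + 1) ^ 2 := by
          have := hy.1; have := hy.2
          nlinarith
        refine mul_le_mul ?_ (Real.exp_le_exp.2 ?_) (Real.exp_pos _).le (by positivity)
        · gcongr
        · rw [neg_div, neg_div, neg_le_neg_iff]
          gcongr
    _ = gaussianReal 0 v (Set.Icc (-a - 1) (-a)) := (gaussianReal_apply _ hv0 _).symm
    _ ≤ _ := measure_mono fun y hy => hy.2

set_option maxHeartbeats 1000000

/-- Theorem 5 of the paper, the lower bound. Fix `ϑ ∈ (0,1)`, `θ > 0`,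
`r > 0` with `θ > 2(1−ϑ)`; calibrate `p → ∞`, `log n / log p → θ`, `ε_n = p^{−ϑ}`,
`τ_n = √(2 r log p)`. For any sequence of measurable selection procedures `β̂⁽ⁿ⁾`, the
expected Hamming distance satisfies: for `r ≥ ϑ`, `d*_n ≥ p^{1−(ϑ+r)²/(4r)−δ}` eventually,
for every `δ > 0`; and for `0 < r < ϑ`, `liminf d*_n / p^{1−ϑ} ≥ 1`. -/
theorem stmt_9 (ϑ θ r : ℝ) (hϑ : ϑ ∈ Set.Ioo (0 : ℝ) 1) (hθ : 0 < θ) (hr : 0 < r)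
    (hθ2 : 2 * (1 - ϑ) < θ)
    (p : ℕ → ℕ) (hp : Tendsto p atTop atTop)
    (hnp : Tendsto (fun n : ℕ => Real.log n / Real.log (p n)) atTop (𝓝 θ))
    (bhat : ∀ n : ℕ, (Fin n → ℝ) → (Fin n → Fin (p n) → ℝ) → Fin (p n) → ℝ)
    (hmeas : ∀ n, Measurable fun yx : (Fin n → ℝ) × (Fin n → Fin (p n) → ℝ) =>
      bhat n yx.1 yx.2) :
    (ϑ ≤ r → ∀ δ : ℝ, 0 < δ → ∀ᶠ n in atTop,
      ENNReal.ofReal ((p n : ℝ) ^ (1 - (ϑ + r) ^ 2 / (4 * r) - δ)) ≤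
        expHamming n (p n) ((p n : ℝ) ^ (-ϑ)) (Real.sqrt (2 * r * Real.log (p n)))
          (bhat n)) ∧
    (r < ϑ → 1 ≤ Filter.liminf
      (fun n =>
        expHamming n (p n) ((p n : ℝ) ^ (-ϑ)) (Real.sqrt (2 * r * Real.log (p n)))
            (bhat n) /
          ENNReal.ofReal ((p n : ℝ) ^ (1 - ϑ)))
      atTop) := by
  have hL : Tendsto (fun n => Real.log (p n)) atTop atTop :=
    Real.tendsto_log_atTop.comp (tendsto_natCast_atTop_atTop.comp hp)
  have hs : Tendsto (fun n => √(Real.log (p n))) atTop atTop := Real.tendsto_sqrt_atTop.comp hL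
  have hε : Tendsto (fun n => (p n : ℝ) ^ (-ϑ)) atTop (𝓝 0) :=
    (tendsto_rpow_neg_atTop hϑ.1).comp (tendsto_natCast_atTop_atTop.comp hp)
  have hconc : ∀ η : ℝ, Tendsto (fun n : ℕ => 1 - cVar / n / η ^ 2) atTop (𝓝 1) := by
    intro η
    have h1 : Tendsto (fun n : ℕ => cVar / (n : ℝ)) atTop (𝓝 0) :=
      tendsto_const_div_atTop_nhds_zero_nat _
    simpa using (h1.div_const (η ^ 2)).const_sub 1
  have hq : (0 : ℝ) < √(2 * r) := by positivity
  have hq2 : √(2 * r) ^ 2 = 2 * r := Real.sq_sqrt (by positivity)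
  have base : ∀ n, 2 ≤ p n → ∃ s : ℝ, s = √(Real.log (p n)) ∧ 0 < s ∧ s ^ 2 = Real.log (p n) ∧
      Real.sqrt (2 * r * Real.log (p n)) = √(2 * r) * s ∧ (0 : ℝ) < p n ∧
      (∀ x : ℝ, (p n : ℝ) ^ x = Real.exp (s ^ 2 * x)) := by
    intro n hn
    have hp1 : (1 : ℝ) < p n := by exact_mod_cast hn
    have hpos : 0 < Real.log (p n) := Real.log_pos hp1
    refine ⟨_, rfl, Real.sqrt_pos.2 hpos, Real.sq_sqrt hpos.le, Real.sqrt_mul (by positivity) _,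
      by linarith, fun x => ?_⟩
    rw [Real.sq_sqrt hpos.le, Real.rpow_def_of_pos (by linarith)]
  constructor
  · intro hrϑ δ hδ
    obtain ⟨η, hη0, hη1, hηf⟩ : ∃ η : ℝ, 0 < η ∧ η < 1 ∧
        ((r * (1 + η) - ϑ) / √(2 * r)) ^ 2 / (2 * (1 - η)) < (r - ϑ) ^ 2 / (4 * r) + δ := by
      have hcont : ContinuousAt
          (fun η : ℝ => ((r * (1 + η) - ϑ) / √(2 * r)) ^ 2 / (2 * (1 - η))) 0 := by
        refine ContinuousAt.div (by fun_prop) (by fun_prop) (by norm_num)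
      have h0 : ((r * (1 + 0) - ϑ) / √(2 * r)) ^ 2 / (2 * (1 - 0)) < (r - ϑ) ^ 2 / (4 * r) + δ := by
        rw [div_pow, hq2]
        have : (r * (1 + 0) - ϑ) ^ 2 / (2 * r) / (2 * (1 - 0)) = (r - ϑ) ^ 2 / (4 * r) := by
          field_simp; ring
        rw [this]; linarith
      have h1 := (hcont.eventually_lt_const h0).filter_mono (nhdsWithin_le_nhds (s := Set.Ioi 0))
      have h2 : ∀ᶠ η : ℝ in 𝓝[>] 0, η ∈ Set.Ioo (0 : ℝ) 1 := Ioo_mem_nhdsGT one_pos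
      obtain ⟨η, h3, h4⟩ := (h1.and h2).exists
      exact ⟨η, h4.1, h4.2, h3⟩
    set A := (r * (1 + η) - ϑ) / √(2 * r) with hA
    have hA0 : 0 ≤ A := div_nonneg (by nlinarith) hq.le
    set K := (√(2 * Real.pi * (1 + η)))⁻¹ with hK
    have hK0 : 0 < K := by positivity
    have hd : 0 < (r - ϑ) ^ 2 / (4 * r) + δ - A ^ 2 / (2 * (1 - η)) := by linarith
    set d := (r - ϑ) ^ 2 / (4 * r) + δ - A ^ 2 / (2 * (1 - η)) with hdd
    have hη' : 0 < 1 - η := by linarith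
    set B := 2 * A / (2 * (1 - η)) with hB
    set C := 1 / (2 * (1 - η)) - Real.log (K / 4) with hC
    filter_upwards [hp.eventually_ge_atTop 2, eventually_gt_atTop 0,
      hε.eventually_le_const (show (0 : ℝ) < 1 / 2 by norm_num),
      (hconc η).eventually_const_le (show (1 / 2 : ℝ) < 1 by norm_num),
      hs.eventually_ge_atTop (max 1 ((|B| + |C|) / d))] with n hp2 hn0 hεn hcn hsn
    obtain ⟨s, hsdef, hs0, hs2, hτ, hp0, hpow⟩ := base n hp2
    rw [← hsdef] at hsn
    have hs1 : 1 ≤ s := (le_max_left _ _).trans hsn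
    have hsd : |B| + |C| ≤ s * d := (div_le_iff₀ hd).1 ((le_max_right _ _).trans hsn)
    have hτ0 : 0 < √(2 * r) * s := by positivity
    have hb := hamming_bound n (p n) hn0 (ε := (p n : ℝ) ^ (-ϑ)) (τ := √(2 * r) * s)
      (ℓ := s ^ 2 * ϑ) (η := η)
      (c := K * Real.exp (-(A * s + 1) ^ 2 / (2 * (1 - η))))
      (by rw [hpow]; ring_nf) (by linarith) hτ0 hη0 (bhat n) (hmeas n) (by
        intro v hv
        rw [abs_lt] at hv
        refine (gauss_tail (a := A * s) (lo := 1 - η) (hi := 1 + η) (by positivity) hη'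
          (by linarith) (by linarith)).trans (measure_mono ?_)
        intro y hy
        have hy' : y ≤ -(A * s) := hy
        show √(2 * r) * s * y + (√(2 * r) * s) ^ 2 * v / 2 ≤ s ^ 2 * ϑ
        have e1 : √(2 * r) * s * y ≤ √(2 * r) * s * (-(A * s)) :=
          mul_le_mul_of_nonneg_left hy' hτ0.le
        have e2 : √(2 * r) * A = r * (1 + η) - ϑ := by rw [hA]; field_simp
        have e3 : √(2 * r) * s * (-(A * s)) = - (s ^ 2 * (r * (1 + η) - ϑ)) := by
          rw [← e2]; ring
        have e4 : (√(2 * r) * s) ^ 2 * v / 2 = s ^ 2 * (r * v) := by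
          rw [mul_pow, hq2]; ring
        have e5 : s ^ 2 * (r * v) ≤ s ^ 2 * (r * (1 + η)) := by
          gcongr; linarith
        rw [e4]
        nlinarith)
    rw [hτ]
    refine le_trans ?_ hb
    rw [← ENNReal.ofReal_natCast, ← ENNReal.ofReal_mul (by linarith),
      ← ENNReal.ofReal_mul (by positivity), ← ENNReal.ofReal_mul (by
        have : 0 ≤ (p n : ℝ) ^ (-ϑ) := by positivity
        exact mul_nonneg (by linarith) this), ← ENNReal.ofReal_mul (by positivity)]
    refine ENNReal.ofReal_le_ofReal ?_
    have hmain : Real.exp (-(s ^ 2 * ((r - ϑ) ^ 2 / (4 * r) + δ))) ≤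
        K / 4 * Real.exp (-(A * s + 1) ^ 2 / (2 * (1 - η))) := by
      rw [← Real.exp_log (show 0 < K / 4 by positivity), ← Real.exp_add]
      refine Real.exp_le_exp.2 ?_
      have e1 : -(A * s + 1) ^ 2 / (2 * (1 - η)) =
          -(s ^ 2 * (A ^ 2 / (2 * (1 - η))) + B * s + 1 / (2 * (1 - η))) := by
        rw [hB]; field_simp; ring
      rw [e1]
      have e2 : B * s + C ≤ s ^ 2 * d := by
        have := le_abs_self B
        have := le_abs_self C
        have := abs_nonneg C
        nlinarith
      rw [hdd, hC] at e2
      linarith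
    have hpe : (p n : ℝ) * (p n : ℝ) ^ (-ϑ) = Real.exp (s ^ 2 * (1 - ϑ)) := by
      rw [← hpow, sub_eq_add_neg, Real.rpow_add hp0, Real.rpow_one]
    calc (p n : ℝ) ^ (1 - (ϑ + r) ^ 2 / (4 * r) - δ)
        = Real.exp (s ^ 2 * (1 - ϑ)) * Real.exp (-(s ^ 2 * ((r - ϑ) ^ 2 / (4 * r) + δ))) := by
          rw [hpow, ← Real.exp_add]
          congr 1
          field_simp
          ring
      _ ≤ Real.exp (s ^ 2 * (1 - ϑ)) *
          (K / 4 * Real.exp (-(A * s + 1) ^ 2 / (2 * (1 - η)))) := by gcongr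
      _ = ((p n : ℝ) * (p n : ℝ) ^ (-ϑ)) * (K * Real.exp (-(A * s + 1) ^ 2 / (2 * (1 - η)))) *
          (1 / 2 * (1 / 2)) := by rw [hpe]; ring
      _ ≤ ((p n : ℝ) * (p n : ℝ) ^ (-ϑ)) * (K * Real.exp (-(A * s + 1) ^ 2 / (2 * (1 - η)))) *
          ((1 - (p n : ℝ) ^ (-ϑ)) * (1 - cVar / n / η ^ 2)) := by
          exact mul_le_mul_of_nonneg_left (mul_le_mul (by linarith) hcn (by norm_num) (by linarith))
            (by positivity)
      _ = _ := by ring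
  · intro hrϑ
    set η := (ϑ - r) / (2 * r) with hη
    have hη0 : 0 < η := div_pos (by linarith) (by positivity)
    have hrη : r * (1 + η) = (ϑ + r) / 2 := by rw [hη]; field_simp; ring
    set b := (ϑ - r * (1 + η)) / √(2 * r) with hb
    have hb0 : 0 < b := div_pos (by rw [hrη]; linarith) hq
    set c : ℕ → ℝ := fun n => 1 - (1 + η) / (b * √(Real.log (p n))) ^ 2 with hc
    have hct : Tendsto c atTop (𝓝 1) := by
      have h1 : Tendsto (fun n => (b * √(Real.log (p n))) ^ 2) atTop atTop :=
        (tendsto_pow_atTop two_ne_zero).comp (hs.const_mul_atTop hb0)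
      simpa using (h1.const_div_atTop (1 + η)).const_sub 1
    have hlim : Tendsto (fun n => ENNReal.ofReal (1 - (p n : ℝ) ^ (-ϑ)) *
        (ENNReal.ofReal (c n) * ENNReal.ofReal (1 - cVar / n / η ^ 2))) atTop (𝓝 1) := by
      have h1 : Tendsto (fun n => ENNReal.ofReal (1 - (p n : ℝ) ^ (-ϑ))) atTop (𝓝 1) := by
        simpa using ENNReal.tendsto_ofReal (hε.const_sub 1)
      have h2 : Tendsto (fun n => ENNReal.ofReal (c n)) atTop (𝓝 1) := by
        simpa using ENNReal.tendsto_ofReal hct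
      have h3 : Tendsto (fun n : ℕ => ENNReal.ofReal (1 - cVar / n / η ^ 2)) atTop (𝓝 1) := by
        simpa using ENNReal.tendsto_ofReal (hconc η)
      have h4 := ENNReal.Tendsto.mul h1 (by simp)
        (ENNReal.Tendsto.mul h2 (by simp) h3 (by simp)) (by simp)
      simpa using h4
    rw [← hlim.liminf_eq]
    refine liminf_le_liminf ?_
    filter_upwards [hp.eventually_ge_atTop 2, eventually_gt_atTop 0,
      hε.eventually_le_const (show (0 : ℝ) < 1 / 2 by norm_num)] with n hp2 hn0 hεn
    obtain ⟨s, hsdef, hs0, hs2, hτ, hp0, hpow⟩ := base n hp2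
    have hτ0 : 0 < √(2 * r) * s := by positivity
    have hbd := hamming_bound n (p n) hn0 (ε := (p n : ℝ) ^ (-ϑ)) (τ := √(2 * r) * s)
      (ℓ := s ^ 2 * ϑ) (η := η) (c := c n)
      (by rw [hpow]; ring_nf) (by linarith) hτ0 hη0 (bhat n) (hmeas n) (by
        intro v hv
        rw [abs_lt] at hv
        have ht : 0 < b * s := by positivity
        refine le_trans (ENNReal.ofReal_le_ofReal ?_) ((gauss_cheb ht).trans (measure_mono ?_))
        · simp only [hc, ← hsdef]
          gcongr
          linarith
        intro y hy
        have hy' : y ≤ b * s := hy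
        show √(2 * r) * s * y + (√(2 * r) * s) ^ 2 * v / 2 ≤ s ^ 2 * ϑ
        have e1 : √(2 * r) * s * y ≤ √(2 * r) * s * (b * s) :=
          mul_le_mul_of_nonneg_left hy' hτ0.le
        have e2 : √(2 * r) * b = ϑ - r * (1 + η) := by rw [hb]; field_simp
        have e3 : √(2 * r) * s * (b * s) = s ^ 2 * (ϑ - r * (1 + η)) := by
          rw [← e2]; ring
        have e4 : (√(2 * r) * s) ^ 2 * v / 2 = s ^ 2 * (r * v) := by
          rw [mul_pow, hq2]; ring
        have e5 : s ^ 2 * (r * v) ≤ s ^ 2 * (r * (1 + η)) := by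
          gcongr; linarith
        rw [e4]
        nlinarith)
    rw [hτ, ENNReal.le_div_iff_mul_le (Or.inl (by
      rw [ne_eq, ENNReal.ofReal_eq_zero, not_le]; positivity)) (Or.inl ENNReal.ofReal_ne_top)]
    refine le_trans (le_of_eq ?_) hbd
    rw [sub_eq_add_neg 1 ϑ, Real.rpow_add hp0, Real.rpow_one, ENNReal.ofReal_mul hp0.le,
      ENNReal.ofReal_natCast]
    ring
end

section
/- Fix a constant c₀ > 3. For each p, let n = n_p ≥ 1 be arbitrary and let X be an n×p random matrix with iid N(0, 1/n) entries. Let D(c₀) be the event that for every nonempty subset S ⊆ {1,…,p}, 1_Sᵀ X_Sᵀ X_S 1_S ≤ |S| · [ 1 + √(|S|/n) · (1 + √(2 c₀ log p)) ]², where X_S is the submatrix of columns indexed by S and 1_S is the all-ones vector of length |S|. Then P(D(c₀)ᶜ) = o(1/p²) as p → ∞; indeed P(D(c₀)ᶜ) ≤ 2 Σ_{k=1}^p exp( −(c₀ − 1) k log p ). -/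
open MeasureTheory ProbabilityTheory Filter Topology

open scoped ENNReal NNReal

/-- The event `D(c₀)` of Lemma 5 of the paper: for every nonempty `S ⊆ {1,…,p}`,
`1_Sᵀ X_Sᵀ X_S 1_S ≤ |S| [1 + √(|S|/n) (1 + √(2 c₀ log p))]²`. -/
def eventD (c₀ : ℝ) (n p : ℕ) : Set (Fin n → Fin p → ℝ) :=
  {x | ∀ S : Finset (Fin p), S.Nonempty →
    ∑ i, (∑ j ∈ S, x i j) ^ 2 ≤
      (S.card : ℝ) *
        (1 + Real.sqrt ((S.card : ℝ) / (n : ℝ)) * (1 + Real.sqrt (2 * c₀ * Real.log p))) ^ 2}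


lemma aux_sum_law (p : ℕ) (v : ℝ≥0) (S : Finset (Fin p)) :
    (Measure.pi fun _ : Fin p => gaussianReal 0 v).map (fun x => ∑ j ∈ S, x j)
      = gaussianReal 0 (S.card * v) := by
  classical
  have hind : iIndepFun (fun (j : Fin p) (x : Fin p → ℝ) => x j)
      (Measure.pi fun _ : Fin p => gaussianReal 0 v) :=
    iIndepFun_pi (X := fun _ x => x) (fun _ => aemeasurable_id)
  induction S using Finset.induction_on with
  | empty => simp
  | insert a s ha ih =>
    have h1 := hind.indepFun_finsetSum_of_notMem (fun j => measurable_pi_apply j) ha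
    have h2 : (Measure.pi fun _ : Fin p => gaussianReal 0 v).map (fun x => x a)
        = gaussianReal 0 v := (measurePreserving_eval (fun _ : Fin p => gaussianReal 0 v) a).map_eq
    have e1 : (∑ j ∈ s, fun x : Fin p → ℝ => x j) = fun x => ∑ j ∈ s, x j := by
      ext x; simp
    rw [e1] at h1
    have h3 := gaussianReal_add_gaussianReal_of_indepFun h1 ih h2
    have e2 : ((fun x : Fin p → ℝ => ∑ j ∈ s, x j) + fun x => x a)
        = fun x => ∑ j ∈ insert a s, x j := by
      ext x; simp [Finset.sum_insert ha, add_comm]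
    rw [e2] at h3
    rw [h3, Finset.card_insert_of_notMem ha]
    push_cast
    congr 1 <;> ring

lemma aux_gauss (v : ℝ≥0) (hv : v ≠ 0) (s : ℝ) (hs : 0 ≤ s) :
    ∫⁻ y, ENNReal.ofReal (Real.exp ((1 - 1 / (1 + s) ^ 2) / (2 * v) * y ^ 2)) ∂(gaussianReal 0 v)
      = ENNReal.ofReal (1 + s) := by
  have hv' : (0 : ℝ) < v := by positivity
  set w : ℝ≥0 := v * (Real.toNNReal (1 + s)) ^ 2 with hw
  have hwr : (w : ℝ) = v * (1 + s) ^ 2 := by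
    simp [hw, Real.coe_toNNReal _ (by linarith : 0 ≤ 1 + s)]
  have hw0 : w ≠ 0 := by
    intro h
    have : (w : ℝ) = 0 := by simp [h]
    rw [hwr] at this
    have : 0 < (v : ℝ) * (1 + s) ^ 2 := by positivity
    linarith
  rw [gaussianReal_of_var_ne_zero _ hv,
    lintegral_withDensity_eq_lintegral_mul _ (measurable_gaussianPDF 0 v) (by fun_prop)]
  have : ∀ y : ℝ, (gaussianPDF 0 v * fun y : ℝ => ENNReal.ofReal
      (Real.exp ((1 - 1 / (1 + s) ^ 2) / (2 * v) * y ^ 2))) y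
      = ENNReal.ofReal (1 + s) * gaussianPDF 0 w y := by
    intro y
    simp only [Pi.mul_apply, gaussianPDF]
    rw [← ENNReal.ofReal_mul (gaussianPDFReal_nonneg _ _ _), ← ENNReal.ofReal_mul (by linarith)]
    congr 1
    simp only [gaussianPDFReal, hwr]
    rw [mul_assoc, ← Real.exp_add, ← mul_assoc (2 * Real.pi) (v : ℝ),
      Real.sqrt_mul (by positivity : 0 ≤ 2 * Real.pi * (v : ℝ)) ((1 + s) ^ 2),
      Real.sqrt_sq (by linarith), ← mul_assoc]
    have h1 : (1 + s) ≠ 0 := by positivity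
    congr 1
    · field_simp
    · congr 1
      field_simp
      ring
  simp_rw [this]
  rw [lintegral_const_mul _ (measurable_gaussianPDF 0 w), lintegral_gaussianPDF_eq_one _ hw0, mul_one]

lemma aux_mgf (n p : ℕ) (v : ℝ≥0) (l : ℝ) (S : Finset (Fin p)) :
    ∫⁻ x, ENNReal.ofReal (Real.exp (l * ∑ i, (∑ j ∈ S, x i j) ^ 2))
      ∂(Measure.pi fun _ : Fin n => Measure.pi fun _ : Fin p => gaussianReal 0 v)
    = (∫⁻ y, ENNReal.ofReal (Real.exp (l * y ^ 2)) ∂(gaussianReal 0 (S.card * v))) ^ n := by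
  set ν := Measure.pi fun _ : Fin p => gaussianReal 0 v with hν
  set g : (Fin p → ℝ) → ℝ≥0∞ := fun z => ENNReal.ofReal (Real.exp (l * (∑ j ∈ S, z j) ^ 2)) with hg
  have hgm : Measurable g := by fun_prop
  have hind : iIndepFun (fun (i : Fin n) (x : Fin n → Fin p → ℝ) => g (x i))
      (Measure.pi fun _ : Fin n => ν) :=
    iIndepFun_pi (X := fun _ x => g x) (fun _ => hgm.aemeasurable)
  have h := lintegral_prod_eq_prod_lintegral_of_indepFun Finset.univ _ hind
    (fun i => hgm.comp (measurable_pi_apply i))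
  have e : ∀ x : Fin n → Fin p → ℝ, ENNReal.ofReal (Real.exp (l * ∑ i, (∑ j ∈ S, x i j) ^ 2))
      = ∏ i, g (x i) := by
    intro x
    rw [Finset.mul_sum, Real.exp_sum, ENNReal.ofReal_prod_of_nonneg]
    intro i _; positivity
  simp_rw [e]
  have h2 : ∀ i : Fin n, ∫⁻ x, g (x i) ∂(Measure.pi fun _ : Fin n => ν)
      = ∫⁻ y, ENNReal.ofReal (Real.exp (l * y ^ 2)) ∂(gaussianReal 0 (S.card * v)) := by
    intro i
    rw [← aux_sum_law, lintegral_map (by fun_prop) (by fun_prop)]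
    exact (measurePreserving_eval (fun _ : Fin n => ν) i).lintegral_comp hgm
  rw [h]
  simp [h2]

lemma aux_tail (n p : ℕ) (hn : 1 ≤ n) (S : Finset (Fin p)) (hS : S.Nonempty) (s : ℝ) (hs : 0 ≤ s) :
    (Measure.pi fun _ : Fin n => Measure.pi fun _ : Fin p => gaussianReal 0 ((n : ℝ≥0))⁻¹)
      {x | (S.card : ℝ) * (1 + s) ^ 2 < ∑ i, (∑ j ∈ S, x i j) ^ 2}
      ≤ ENNReal.ofReal (Real.exp (-(n * s ^ 2 / 2))) := by
  have hn' : (0 : ℝ) < n := by exact_mod_cast hn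
  have hk : (0 : ℝ) < S.card := by exact_mod_cast hS.card_pos
  set v : ℝ≥0 := S.card * ((n : ℝ≥0))⁻¹ with hv
  have hvr : (v : ℝ) = S.card / n := by simp [hv, div_eq_mul_inv]
  have hv0 : v ≠ 0 := by
    have : 0 < (v : ℝ) := by rw [hvr]; positivity
    exact_mod_cast this.ne'
  set l : ℝ := (1 - 1 / (1 + s) ^ 2) / (2 * v) with hl
  have hl0 : 0 ≤ l := by
    have : 1 / (1 + s) ^ 2 ≤ 1 := by
      rw [div_le_one (by positivity)]; nlinarith
    apply div_nonneg (by linarith) (by positivity)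
  have hmgf := aux_mgf n p ((n : ℝ≥0))⁻¹ l S
  rw [← hv, hl, aux_gauss v hv0 s hs, ← hl] at hmgf
  set A : ℝ := n * ((1 + s) ^ 2 - 1) / 2 with hA
  have hlA : l * (S.card * (1 + s) ^ 2) = A := by
    rw [hl, hA, hvr]; field_simp
  have hM := mul_meas_ge_le_lintegral (μ := Measure.pi fun _ : Fin n => Measure.pi fun _ : Fin p =>
    gaussianReal 0 ((n : ℝ≥0))⁻¹) (f := fun x => ENNReal.ofReal
      (Real.exp (l * ∑ i, (∑ j ∈ S, x i j) ^ 2))) (by fun_prop) (ENNReal.ofReal (Real.exp A))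
  rw [hmgf] at hM
  have hsub : {x : Fin n → Fin p → ℝ | (S.card : ℝ) * (1 + s) ^ 2 < ∑ i, (∑ j ∈ S, x i j) ^ 2}
      ⊆ {x | ENNReal.ofReal (Real.exp A) ≤ ENNReal.ofReal
      (Real.exp (l * ∑ i, (∑ j ∈ S, x i j) ^ 2))} := by
    intro x hx
    simp only [Set.mem_ofPred_eq] at hx ⊢
    apply ENNReal.ofReal_le_ofReal
    rw [Real.exp_le_exp, ← hlA]
    exact mul_le_mul_of_nonneg_left hx.le hl0
  refine (measure_mono hsub).trans ?_
  have hpos : ENNReal.ofReal (Real.exp A) ≠ 0 := by simp [Real.exp_pos]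
  rw [mul_comm] at hM
  refine (ENNReal.le_div_iff_mul_le (Or.inl hpos) (Or.inl ENNReal.ofReal_ne_top)).2 hM |>.trans ?_
  rw [← ENNReal.ofReal_pow (by linarith), ← ENNReal.ofReal_div_of_pos (Real.exp_pos _)]
  apply ENNReal.ofReal_le_ofReal
  rw [div_le_iff₀ (Real.exp_pos _), ← Real.exp_add]
  have : (1 + s) ^ n ≤ (Real.exp s) ^ n :=
    pow_le_pow_left₀ (by linarith) (by linarith [Real.add_one_le_exp s]) n
  refine this.trans ?_
  rw [← Real.exp_nat_mul, Real.exp_le_exp, hA]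
  nlinarith

lemma aux_bound (c₀ : ℝ) (hc₀ : 3 < c₀) (n p : ℕ) (hn : 1 ≤ n) :
    (Measure.pi fun _ : Fin n => Measure.pi fun _ : Fin p => gaussianReal 0 ((n : ℝ≥0))⁻¹)
        (eventD c₀ n p)ᶜ
        ≤ ENNReal.ofReal
            (∑ k ∈ Finset.Icc 1 p, Real.exp (-(c₀ - 1) * (k : ℝ) * Real.log p)) := by
  classical
  have hn' : (0 : ℝ) < n := by exact_mod_cast hn
  set P := Measure.pi fun _ : Fin n => Measure.pi fun _ : Fin p => gaussianReal 0 ((n : ℝ≥0))⁻¹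
  have hlog : 0 ≤ Real.log p := Real.log_natCast_nonneg p
  set T : Finset (Finset (Fin p)) := Finset.univ.filter (fun S => S.Nonempty) with hT
  have hsub : (eventD c₀ n p)ᶜ ⊆ ⋃ S ∈ T, {x | (S.card : ℝ) *
        (1 + Real.sqrt ((S.card : ℝ) / (n : ℝ)) * (1 + Real.sqrt (2 * c₀ * Real.log p))) ^ 2
          < ∑ i, (∑ j ∈ S, x i j) ^ 2} := by
    intro x hx
    simp only [eventD, Set.mem_compl_iff, Set.mem_ofPred_eq, not_forall, not_le] at hx
    obtain ⟨S, hS, h⟩ := hx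
    simp only [Set.mem_iUnion]
    exact ⟨S, by simp [hT, hS], h⟩
  refine (measure_mono hsub).trans ((measure_biUnion_finset_le _ _).trans ?_)
  have hb : ∀ S ∈ T, P {x | (S.card : ℝ) *
        (1 + Real.sqrt ((S.card : ℝ) / (n : ℝ)) * (1 + Real.sqrt (2 * c₀ * Real.log p))) ^ 2
          < ∑ i, (∑ j ∈ S, x i j) ^ 2} ≤
        ENNReal.ofReal (Real.exp (-(c₀ * S.card * Real.log p))) := by
    intro S hS
    have hS' : S.Nonempty := by simpa [hT] using hS
    refine (aux_tail n p hn S hS' _ (by positivity)).trans (ENNReal.ofReal_le_ofReal ?_)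
    rw [Real.exp_le_exp, neg_le_neg_iff, mul_pow, Real.sq_sqrt (by positivity)]
    have h0 : 0 ≤ 2 * c₀ * Real.log p := by positivity
    have h1 := Real.sq_sqrt h0
    have h2 := Real.sqrt_nonneg (2 * c₀ * Real.log p)
    have h3 : 2 * c₀ * Real.log p ≤ (1 + Real.sqrt (2 * c₀ * Real.log p)) ^ 2 := by nlinarith
    have h4 : (n : ℝ) * ((S.card : ℝ) / n * (1 + Real.sqrt (2 * c₀ * Real.log p)) ^ 2) / 2
        = S.card * (1 + Real.sqrt (2 * c₀ * Real.log p)) ^ 2 / 2 := by field_simp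
    rw [h4]
    have := mul_le_mul_of_nonneg_left h3 (Nat.cast_nonneg (α := ℝ) S.card)
    nlinarith
  refine (Finset.sum_le_sum hb).trans ?_
  rw [← ENNReal.ofReal_sum_of_nonneg (fun _ _ => (Real.exp_pos _).le)]
  apply ENNReal.ofReal_le_ofReal
  have hmap : ∀ S ∈ T, S.card ∈ Finset.Icc 1 p := by
    intro S hS
    have hS' : S.Nonempty := by simpa [hT] using hS
    rw [Finset.mem_Icc]
    exact ⟨hS'.card_pos, by simpa using S.card_le_univ⟩
  rw [← Finset.sum_fiberwise_of_maps_to hmap]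
  apply Finset.sum_le_sum
  intro k hk
  rw [Finset.mem_Icc] at hk
  have hp : (0 : ℝ) < p := by exact_mod_cast (by omega : 0 < p)
  have h1 : ∑ S ∈ T with S.card = k, Real.exp (-(c₀ * S.card * Real.log p))
      = (T.filter (fun S => S.card = k)).card * Real.exp (-(c₀ * k * Real.log p)) := by
    rw [← nsmul_eq_mul, ← Finset.sum_const]
    apply Finset.sum_congr rfl
    intro S hS
    rw [(Finset.mem_filter.1 hS).2]
  rw [h1]
  have h2 : (T.filter (fun S => S.card = k)).card ≤ p ^ k := by
    refine (Finset.card_le_card (t := Finset.powersetCard k Finset.univ) ?_).trans ?_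
    · intro S hS
      rw [Finset.mem_powersetCard]
      exact ⟨Finset.subset_univ _, (Finset.mem_filter.1 hS).2⟩
    · rw [Finset.card_powersetCard, Finset.card_univ, Fintype.card_fin]
      exact Nat.choose_le_pow p k
  have h3 : ((T.filter (fun S => S.card = k)).card : ℝ) ≤ Real.exp (k * Real.log p) := by
    rw [Real.exp_nat_mul, Real.exp_log hp]
    exact_mod_cast h2
  refine (mul_le_mul_of_nonneg_right h3 (Real.exp_pos _).le).trans ?_
  rw [← Real.exp_add]
  apply le_of_eq
  congr 1
  ring

lemma aux_geom (c₀ : ℝ) (hc₀ : 3 < c₀) (p : ℕ) (hp : 2 ≤ p) :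
    (p : ℝ) ^ 2 * ∑ k ∈ Finset.Icc 1 p, Real.exp (-(c₀ - 1) * (k : ℝ) * Real.log p)
      ≤ 2 * (p : ℝ) ^ (-(c₀ - 3)) := by
  have hp2 : (2 : ℝ) ≤ p := by exact_mod_cast hp
  have hp0 : (0 : ℝ) < p := by linarith
  set r : ℝ := Real.exp (-(c₀ - 1) * Real.log p) with hr
  have hr0 : 0 < r := Real.exp_pos _
  have hpr : (p : ℝ) ^ 2 * r = (p : ℝ) ^ (-(c₀ - 3)) := by
    have : (p : ℝ) ^ 2 = Real.exp (2 * Real.log p) := by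
      rw [show (2 : ℝ) * Real.log p = ((2 : ℕ) : ℝ) * Real.log p by norm_num, Real.exp_nat_mul,
        Real.exp_log hp0]
    rw [this, hr, ← Real.exp_add, Real.rpow_def_of_pos hp0]
    congr 1; ring
  have hr2 : r ≤ 1 / 2 := by
    have h1 : (p : ℝ) ^ (-(c₀ - 3)) ≤ 1 :=
      Real.rpow_le_one_of_one_le_of_nonpos (by linarith) (by linarith)
    nlinarith
  have hsum : ∑ k ∈ Finset.Icc 1 p, Real.exp (-(c₀ - 1) * (k : ℝ) * Real.log p)
      = r * ∑ k ∈ Finset.range p, r ^ k := by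
    rw [Finset.mul_sum, ← Finset.Ico_succ_right_eq_Icc, Finset.sum_Ico_eq_sum_range]
    apply Finset.sum_congr (by simp)
    intro k _
    rw [← pow_succ', hr, ← Real.exp_nat_mul]
    congr 1; push_cast; ring
  have hg : ∑ k ∈ Finset.range p, r ^ k ≤ 2 := by
    have h1 := mul_neg_geom_sum r p
    have h2 : 0 < r ^ p := by positivity
    have h3 : 0 ≤ ∑ k ∈ Finset.range p, r ^ k := by positivity
    nlinarith
  rw [hsum, ← mul_assoc, hpr, mul_comm]
  exact mul_le_mul_of_nonneg_right hg (Real.rpow_nonneg hp0.le _)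

/-- Lemma 5 of the paper. Fix `c₀ > 3`. For each `p`, let `n = n_p ≥ 1`
and let `X` be an `n × p` matrix with iid `N(0, 1/n)` entries. Then
`P(D(c₀)ᶜ) ≤ 2 Σ_{k=1}^p exp(−(c₀−1) k log p)`, and `P(D(c₀)ᶜ) = o(1/p²)` as `p → ∞`. -/
theorem stmt_12 (c₀ : ℝ) (hc₀ : 3 < c₀) (n : ℕ → ℕ) (hn : ∀ p, 1 ≤ n p) :
    (∀ p : ℕ,
      (Measure.pi fun _ : Fin (n p) =>
          Measure.pi fun _ : Fin p => gaussianReal 0 ((n p : ℝ≥0))⁻¹)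
        (eventD c₀ (n p) p)ᶜ
        ≤ ENNReal.ofReal
            (2 * ∑ k ∈ Finset.Icc 1 p, Real.exp (-(c₀ - 1) * (k : ℝ) * Real.log p))) ∧
    Tendsto
      (fun p : ℕ => (p : ℝ≥0∞) ^ 2 *
        (Measure.pi fun _ : Fin (n p) =>
            Measure.pi fun _ : Fin p => gaussianReal 0 ((n p : ℝ≥0))⁻¹)
          (eventD c₀ (n p) p)ᶜ)
      atTop (𝓝 0) := by
  constructor
  · intro p
    refine (aux_bound c₀ hc₀ (n p) p (hn p)).trans (ENNReal.ofReal_le_ofReal ?_)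
    have : 0 ≤ ∑ k ∈ Finset.Icc 1 p, Real.exp (-(c₀ - 1) * (k : ℝ) * Real.log p) :=
      Finset.sum_nonneg fun _ _ => (Real.exp_pos _).le
    linarith
  · have hlim : Tendsto (fun p : ℕ => ENNReal.ofReal (2 * (p : ℝ) ^ (-(c₀ - 3)))) atTop (𝓝 0) := by
      have h1 := ((tendsto_rpow_neg_atTop (by linarith : 0 < c₀ - 3)).comp
        tendsto_natCast_atTop_atTop).const_mul 2
      have h2 := (ENNReal.continuous_ofReal.tendsto _).comp h1
      simpa [Function.comp_def] using h2
    refine tendsto_of_tendsto_of_tendsto_of_le_of_le' tendsto_const_nhds hlim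
      (Eventually.of_forall fun _ => zero_le) ?_
    filter_upwards [eventually_ge_atTop 2] with p hp
    refine (mul_le_mul_right (aux_bound c₀ hc₀ (n p) p (hn p)) _).trans ?_
    rw [← ENNReal.ofReal_natCast, ← ENNReal.ofReal_pow (Nat.cast_nonneg _),
      ← ENNReal.ofReal_mul (by positivity)]
    exact ENNReal.ofReal_le_ofReal (aux_geom c₀ hc₀ p hp)
end

section
/- Let C_SS be an s×s real symmetric positive definite matrix such that the all-ones vector 1_S ∈ ℝ^s is an eigenvector of C_SS, say C_SS 1_S = μ 1_S with μ > 0, and let C_NS be any real m×s matrix. Then the componentwise inequality |C_NS C_SS^{-1} 1_S| ≤ 1_S (the lasso irrepresentable condition (C1) for β_S ∝ 1_S) holds if and only if the componentwise inequality |C_NS 1_S| ≤ |C_SS 1_S| (the marginal regression faithfulness condition (C2) for β_S ∝ 1_S) holds. -/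
open Matrix

/-- Let `C_SS` be an `s × s` real symmetric positive definite matrix having
the all-ones vector as an eigenvector, `C_SS 1 = μ 1` with `μ > 0`, and let `C_NS` be any
`m × s` real matrix. Then the componentwise inequality `|C_NS C_SS⁻¹ 1| ≤ 1` (lasso
irrepresentable condition for `β_S ∝ 1_S`) holds if and only if the componentwise inequality
`|C_NS 1| ≤ |C_SS 1|` (marginal regression faithfulness condition for `β_S ∝ 1_S`) holds. -/
theorem stmt_16 {s m : ℕ} (Css : Matrix (Fin s) (Fin s) ℝ)
    (Cns : Matrix (Fin m) (Fin s) ℝ) (hpd : Css.PosDef)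
    (μ : ℝ) (hμ : 0 < μ)
    (heig : Css.mulVec (fun _ => 1) = fun _ => μ) :
    ((∀ i, |(Cns * Css⁻¹).mulVec (fun _ => 1) i| ≤ 1) ↔
      (∀ i j, |Cns.mulVec (fun _ => 1) i| ≤ |Css.mulVec (fun _ => 1) j|)) := by
  have hdet : IsUnit Css.det := hpd.det_pos.ne'.isUnit
  have hinv : Css⁻¹.mulVec (fun _ => (1 : ℝ)) = μ⁻¹ • (fun _ => (1 : ℝ)) := by
    have h1 : Css.mulVec (μ⁻¹ • (fun _ => (1 : ℝ))) = fun _ => 1 := by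
      rw [Matrix.mulVec_smul, heig]
      funext j
      simp [hμ.ne']
    rw [← h1, Matrix.mulVec_mulVec, Matrix.nonsing_inv_mul _ hdet, Matrix.one_mulVec, h1]
  have key : ∀ i, |(Cns * Css⁻¹).mulVec (fun _ => 1) i| ≤ 1 ↔
      |Cns.mulVec (fun _ => 1) i| ≤ μ := by
    intro i
    rw [← Matrix.mulVec_mulVec, hinv, Matrix.mulVec_smul, Pi.smul_apply, smul_eq_mul,
      abs_mul, abs_of_pos (inv_pos.mpr hμ), inv_mul_le_iff₀ hμ, mul_one]
  simp only [key, heig, abs_of_pos hμ]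
  constructor
  · intro h i _
    exact h i
  · intro h i
    rcases Nat.eq_zero_or_pos s with h0 | h0
    · subst h0
      simp [Matrix.mulVec, dotProduct, hμ.le]
    · exact h i ⟨0, h0⟩
end
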